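/- arXiv:1702.04969 — 4 statements merged into one kernel-verified Lean document; each statement's English description precedes it below -/
import Mathlib

section
/- Let n ≥ 1, let p ≥ 1, q ≥ 1, r > 0, let α, β, γ be real and 0 < a ≤ 1, and assume -γ < n/r, -α < n/p, -β < n/q, and γ + n/r = a(α - 1 + n/p) + (1-a)(β + n/q). Set Δ = -γ + aα + (1-a)β. If there exists a constant c > 0 such that for all smooth compactly supported f : ℝⁿ → ℝ one has (∫_{ℝⁿ} |x|^{γr} |f(x)|^{r} dx)^{1/r} ≤ c (∫_{ℝⁿ} |x|^{αp} |∇f(x)|^{p} dx)^{a/p} (∫_{ℝⁿ} |x|^{βq} |f(x)|^{q} dx)^{(1-a)/q}, then Δ ≥ 0, and moreover Δ ≤ a in the case 1/r + γ/n = 1/p + (α-1)/n. -/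
open MeasureTheory

lemma ckn_weight {R s m : ℝ} (hR : 0 < R) (h1 : R / 2 ≤ m) (h2 : m ≤ 2 * R) :
    2 ^ (-|s|) * R ^ s ≤ m ^ s ∧ m ^ s ≤ 2 ^ |s| * R ^ s := by
  have hm : 0 < m := by linarith
  have hu : m = (m / R) * R := by field_simp
  have h3 : m ^ s = (m / R) ^ s * R ^ s := by
    rw [← Real.mul_rpow (by positivity) hR.le, ← hu]
  have h4 : 1 / 2 ≤ m / R := by rw [le_div_iff₀ hR]; linarith
  have h5 : m / R ≤ 2 := by rw [div_le_iff₀ hR]; linarith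
  have hRs : 0 < R ^ s := by positivity
  rw [h3]
  have h2' : ∀ t : ℝ, (1 / 2 : ℝ) ^ t = 2 ^ (-t) := by
    intro t
    rw [one_div, Real.inv_rpow (by norm_num), Real.rpow_neg (by norm_num)]
  rcases le_total 0 s with hs | hs
  · rw [abs_of_nonneg hs]
    constructor
    · gcongr
      rw [← h2']
      exact Real.rpow_le_rpow (by norm_num) h4 hs
    · gcongr
  · rw [abs_of_nonpos hs, neg_neg]
    constructor
    · refine mul_le_mul_of_nonneg_right ?_ hRs.le
      exact Real.rpow_le_rpow_of_nonpos (by positivity) h5 hs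
    · refine mul_le_mul_of_nonneg_right ?_ hRs.le
      rw [← h2']
      exact Real.rpow_le_rpow_of_nonpos (by norm_num) h4 hs

lemma ckn_bounds {n : ℕ} {G : EuclideanSpace ℝ (Fin n) → ℝ} (hG : Continuous G)
    (hGc : HasCompactSupport G) (hG0 : ∀ x, 0 ≤ G x) {R : ℝ} (hR : 0 < R)
    (hs : ∀ x, G x ≠ 0 → R / 2 ≤ ‖x‖ ∧ ‖x‖ ≤ 2 * R) (s : ℝ) :
    Integrable (fun x => ‖x‖ ^ s * G x) ∧
    2 ^ (-|s|) * R ^ s * ∫ x, G x ≤ ∫ x, ‖x‖ ^ s * G x ∧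
    ∫ x, ‖x‖ ^ s * G x ≤ 2 ^ |s| * R ^ s * ∫ x, G x := by
  have hGi : Integrable G := hG.integrable_of_hasCompactSupport hGc
  have hub : ∀ x, ‖x‖ ^ s * G x ≤ 2 ^ |s| * R ^ s * G x := by
    intro x
    by_cases h : G x = 0
    · simp [h]
    · exact mul_le_mul_of_nonneg_right (ckn_weight hR (hs x h).1 (hs x h).2).2 (hG0 x)
  have hlb : ∀ x, 2 ^ (-|s|) * R ^ s * G x ≤ ‖x‖ ^ s * G x := by
    intro x
    by_cases h : G x = 0
    · simp [h]
    · exact mul_le_mul_of_nonneg_right (ckn_weight hR (hs x h).1 (hs x h).2).1 (hG0 x)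
  have hnn : ∀ x, 0 ≤ ‖x‖ ^ s * G x := fun x => mul_nonneg (by positivity) (hG0 x)
  have hint : Integrable (fun x => ‖x‖ ^ s * G x) := by
    refine Integrable.mono' (hGi.const_mul (2 ^ |s| * R ^ s)) ?_ ?_
    · exact ((measurable_norm.pow_const s).mul hG.measurable).aestronglyMeasurable
    · refine Filter.Eventually.of_forall fun x => ?_
      rw [Real.norm_of_nonneg (hnn x)]
      exact hub x
  refine ⟨hint, ?_, ?_⟩
  · rw [← integral_const_mul]
    exact integral_mono (hGi.const_mul _) hint hlb
  · rw [← integral_const_mul]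
    exact integral_mono hint (hGi.const_mul _) hub

lemma ckn_growth {K L x y : ℝ} (hK : 0 < K)
    (h : ∀ N : ℕ, 2 ≤ N → K * (N : ℝ) ^ x ≤ L * (N : ℝ) ^ y) : x ≤ y := by
  by_contra! hxy
  have ht : Filter.Tendsto (fun N : ℕ => (N : ℝ) ^ (x - y)) Filter.atTop Filter.atTop :=
    (tendsto_rpow_atTop (by linarith)).comp tendsto_natCast_atTop_atTop
  obtain ⟨N, hN, hN2⟩ := ((ht.eventually_gt_atTop (L / K)).and
    (Filter.eventually_ge_atTop 2)).exists
  have h1 := h N hN2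
  have hNp : (0 : ℝ) < N := by positivity
  rw [Real.rpow_sub hNp, div_lt_div_iff₀ hK (by positivity)] at hN
  linarith

lemma ckn_sum_rpow {F : Type*} [NormedAddCommGroup F] {t : ℝ} (ht : 0 < t) (S : Finset ℕ)
    (v : ℕ → F) (hv : ∀ i j, i ≠ j → v i = 0 ∨ v j = 0) :
    ‖∑ k ∈ S, v k‖ ^ t = ∑ k ∈ S, ‖v k‖ ^ t := by
  by_cases h : ∃ i ∈ S, v i ≠ 0
  · obtain ⟨i, hi, hvi⟩ := h
    have h0 : ∀ j, j ≠ i → v j = 0 := fun j hj => by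
      rcases hv i j hj.symm with h | h
      · exact absurd h hvi
      · exact h
    rw [Finset.sum_eq_single_of_mem i hi (fun j _ hj => h0 j hj),
      Finset.sum_eq_single_of_mem i hi (fun j _ hj => by
        rw [h0 j hj, norm_zero, Real.zero_rpow ht.ne'])]
  · push Not at h
    rw [Finset.sum_eq_zero h, norm_zero, Real.zero_rpow ht.ne', Finset.sum_eq_zero]
    intro i hi
    rw [h i hi, norm_zero, Real.zero_rpow ht.ne']

lemma ckn_scale {n : ℕ} {F : Type*} [NormedAddCommGroup F] [NormedSpace ℝ F]
    {W : EuclideanSpace ℝ (Fin n) → F} (hW : Continuous W) (hWc : HasCompactSupport W)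
    (hs : ∀ x, W x ≠ 0 → 1 / 2 ≤ ‖x‖ ∧ ‖x‖ < 2) {s t A : ℝ} (ht : 0 < t)
    (hA : A * t = s + n) (N : ℕ) :
    ∫ x, ‖x‖ ^ s * ‖∑ k ∈ Finset.range N, ((4 : ℝ) ^ k) ^ A • W ((4 : ℝ) ^ k • x)‖ ^ t
      = N * ∫ x, ‖x‖ ^ s * ‖W x‖ ^ t := by
  have hdisj : ∀ x : EuclideanSpace ℝ (Fin n), ∀ i j : ℕ, i < j →
      W ((4 : ℝ) ^ i • x) = 0 ∨ W ((4 : ℝ) ^ j • x) = 0 := by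
    intro x i j hij
    by_contra! hc
    have h1 := (hs _ hc.1).1
    have h2 := (hs _ hc.2).2
    rw [norm_smul, norm_pow, Real.norm_of_nonneg (by norm_num : (0 : ℝ) ≤ 4)] at h1 h2
    have h3 : (4 : ℝ) ^ (i + 1) ≤ 4 ^ j := pow_le_pow_right₀ (by norm_num) hij
    have h4 := mul_le_mul_of_nonneg_right h3 (norm_nonneg x)
    rw [pow_succ] at h4
    linarith
  have hpt : ∀ x : EuclideanSpace ℝ (Fin n),
      ‖x‖ ^ s * ‖∑ k ∈ Finset.range N, ((4 : ℝ) ^ k) ^ A • W ((4 : ℝ) ^ k • x)‖ ^ t =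
      ∑ k ∈ Finset.range N, ((4 : ℝ) ^ k) ^ n *
        (fun y => ‖y‖ ^ s * ‖W y‖ ^ t) ((4 : ℝ) ^ k • x) := by
    intro x
    rw [ckn_sum_rpow ht, Finset.mul_sum]
    · refine Finset.sum_congr rfl fun k _ => ?_
      have hc : (0 : ℝ) < 4 ^ k := by positivity
      generalize (4 : ℝ) ^ k = c at hc
      simp only [norm_smul]
      rw [Real.norm_of_nonneg (by positivity : 0 ≤ c ^ A), Real.norm_of_nonneg hc.le,
        Real.mul_rpow (by positivity) (by positivity), Real.mul_rpow hc.le (by positivity),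
        ← Real.rpow_mul hc.le, hA, Real.rpow_add hc, Real.rpow_natCast]
      ring
    · intro i j hij
      rcases lt_or_gt_of_ne hij with h | h
      · rcases hdisj x i j h with h | h <;> simp [h]
      · rcases hdisj x j i h with h | h <;> simp [h]
  have hint : Integrable (fun y => ‖y‖ ^ s * ‖W y‖ ^ t) := by
    refine (ckn_bounds (G := fun y => ‖W y‖ ^ t) (R := 1) ?_ ?_ ?_ one_pos ?_ s).1
    · exact hW.norm.rpow_const fun _ => Or.inr ht.le
    · exact hWc.comp_left (g := fun w => ‖w‖ ^ t) (by simp [Real.zero_rpow ht.ne'])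
    · intro x; positivity
    · intro x hx
      have : W x ≠ 0 := fun h => hx (by simp [h, Real.zero_rpow ht.ne'])
      have := hs x this
      constructor <;> linarith [this.1, this.2]
  simp_rw [hpt]
  rw [integral_finsetSum]
  · have : ∀ k ∈ Finset.range N, ∫ x : EuclideanSpace ℝ (Fin n), ((4 : ℝ) ^ k) ^ n *
        (fun y => ‖y‖ ^ s * ‖W y‖ ^ t) ((4 : ℝ) ^ k • x) = ∫ x, ‖x‖ ^ s * ‖W x‖ ^ t := by
      intro k _
      have hc : (0 : ℝ) < 4 ^ k := by positivity
      rw [integral_const_mul, Measure.integral_comp_smul_of_nonneg volume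
        (fun y : EuclideanSpace ℝ (Fin n) => ‖y‖ ^ s * ‖W y‖ ^ t) ((4 : ℝ) ^ k) (hR := hc.le)]
      simp only [finrank_euclideanSpace, Fintype.card_fin, smul_eq_mul]
      rw [← mul_assoc, mul_inv_cancel₀ (by positivity), one_mul]
    rw [Finset.sum_congr rfl this]
    simp
  · intro k _
    exact (hint.comp_smul (by positivity : (4 : ℝ) ^ k ≠ 0)).const_mul _

lemma ckn_grad {n : ℕ} (f : EuclideanSpace ℝ (Fin n) → ℝ) (x) :
    ‖gradient f x‖ = ‖fderiv ℝ f x‖ := by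
  simp [gradient]

/-- A fixed bump function with support in the ball of radius one half. -/
lemma ckn_bump (n : ℕ) : ∃ φ : EuclideanSpace ℝ (Fin n) → ℝ, ContDiff ℝ (⊤ : ℕ∞) φ ∧
    HasCompactSupport φ ∧ (∀ x, φ x ≠ 0 → ‖x‖ < 1 / 2) ∧
    (∀ x, fderiv ℝ φ x ≠ 0 → ‖x‖ ≤ 1 / 2) ∧ φ 0 ≠ 0 := by
  let b : ContDiffBump (0 : EuclideanSpace ℝ (Fin n)) := ⟨1 / 4, 1 / 2, by norm_num, by norm_num⟩
  refine ⟨b, b.contDiff, b.hasCompactSupport, ?_, ?_, ?_⟩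
  · intro x hx
    have : x ∈ Function.support b := hx
    rw [b.support_eq] at this
    simpa [b] using this
  · intro x hx
    have : x ∈ tsupport b := support_fderiv_subset ℝ hx
    rw [b.tsupport_eq] at this
    simpa [b] using this
  · have : b 0 = 1 := b.one_of_mem_closedBall (by simp [b])
    rw [this]; exact one_ne_zero

lemma ckn_int_pos {n : ℕ} {φ : EuclideanSpace ℝ (Fin n) → ℝ} (h : Continuous φ)
    (hc : HasCompactSupport φ) {x} (hx : φ x ≠ 0) {r : ℝ} (hr : 0 < r) :
    0 < ∫ x, |φ x| ^ r := by
  refine Continuous.integral_pos_of_hasCompactSupport_nonneg_nonzero (x := x) ?_ ?_ ?_ ?_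
  · exact h.abs.rpow_const fun _ => Or.inr hr.le
  · exact hc.comp_left (g := fun w => |w| ^ r) (by simp [Real.zero_rpow hr.ne'])
  · intro x; simp only [Pi.zero_apply]; positivity
  · have : 0 < |φ x| := abs_pos.mpr hx
    positivity

set_option maxHeartbeats 2000000

open MeasureTheory

/-- Caffarelli–Kohn–Nirenberg inequalities on ℝⁿ (necessity direction, in the
formulation of D'Ancona–Luca'). -/
theorem stmt_5 (n : ℕ) (hn : 1 ≤ n) (p q r α β γ a : ℝ)
    (hp : 1 ≤ p) (hq : 1 ≤ q) (hr : 0 < r) (ha0 : 0 < a) (ha1 : a ≤ 1)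
    (hγ : -γ < (n : ℝ) / r) (hα : -α < (n : ℝ) / p) (hβ : -β < (n : ℝ) / q)
    (hbal : γ + (n : ℝ) / r =
      a * (α - 1 + (n : ℝ) / p) + (1 - a) * (β + (n : ℝ) / q))
    (hineq : ∃ c : ℝ, 0 < c ∧ ∀ f : EuclideanSpace ℝ (Fin n) → ℝ,
      ContDiff ℝ (⊤ : ℕ∞) f → HasCompactSupport f →
      (∫ x, ‖x‖ ^ (γ * r) * |f x| ^ r) ^ (1 / r) ≤
        c * (∫ x, ‖x‖ ^ (α * p) * ‖gradient f x‖ ^ p) ^ (a / p) *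
          (∫ x, ‖x‖ ^ (β * q) * |f x| ^ q) ^ ((1 - a) / q)) :
    0 ≤ -γ + a * α + (1 - a) * β ∧
      (1 / r + γ / (n : ℝ) = 1 / p + (α - 1) / (n : ℝ) →
        -γ + a * α + (1 - a) * β ≤ a) := by
  obtain ⟨c, hc, hineq⟩ := hineq
  have hp0 : 0 < p := by linarith
  have hq0 : 0 < q := by linarith
  have hn0 : (0 : ℝ) < n := by exact_mod_cast hn
  simp only [ckn_grad] at hineq
  obtain ⟨φ, hφ, hφc, hφs, hφd, hφ0⟩ := ckn_bump n
  have hφ1 : Continuous (fderiv ℝ φ) := hφ.continuous_fderiv (by simp)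
  have hφ1c : HasCompactSupport (fderiv ℝ φ) := hφc.fderiv ℝ
  obtain ⟨e, he⟩ : ∃ e : EuclideanSpace ℝ (Fin n), ‖e‖ = 1 :=
    ⟨EuclideanSpace.single ⟨0, hn⟩ 1, by simp⟩
  have hG1 := ckn_int_pos hφ.continuous hφc hφ0 hr
  have hG2 : 0 ≤ ∫ x, ‖fderiv ℝ φ x‖ ^ p := integral_nonneg fun x => by positivity
  have hG3 : 0 ≤ ∫ x, |φ x| ^ q := integral_nonneg fun x => by positivity
  have htr : ∀ R : ℝ, 1 ≤ R → ∀ x : EuclideanSpace ℝ (Fin n), ‖x - R • e‖ ≤ 1 / 2 →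
      R / 2 ≤ ‖x‖ ∧ ‖x‖ ≤ 3 / 2 * R := by
    intro R hR x hx
    have hRe : ‖R • e‖ = R := by rw [norm_smul, he, Real.norm_of_nonneg (by linarith), mul_one]
    have h1 := norm_sub_norm_le x (R • e)
    have h2 := norm_sub_norm_le (R • e) x
    rw [norm_sub_rev] at h2
    constructor <;> linarith
  -- translated bumps
  have hψd : ∀ v x, fderiv ℝ (fun x => φ (x - v)) x = fderiv ℝ φ (x - v) := by
    intro v x
    exact fderiv_comp_sub ..
  have hψ : ∀ v, ContDiff ℝ (⊤ : ℕ∞) (fun x => φ (x - v)) := fun v =>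
    hφ.comp (contDiff_id.sub contDiff_const)
  have hψc : ∀ v, HasCompactSupport (fun x => φ (x - v)) := fun v =>
    hφc.comp_homeomorph (Homeomorph.subRight v)
  -- bounds for the translated bumps
  have hB : ∀ R : ℝ, 1 ≤ R → ∀ (s t : ℝ), 0 < t →
      2 ^ (-|s|) * R ^ s * (∫ x, |φ x| ^ t) ≤ ∫ x, ‖x‖ ^ s * |φ (x - R • e)| ^ t ∧
      ∫ x, ‖x‖ ^ s * |φ (x - R • e)| ^ t ≤ 2 ^ |s| * R ^ s * ∫ x, |φ x| ^ t := by
    intro R hR s t ht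
    have := (ckn_bounds (G := fun x => |φ (x - R • e)| ^ t) (R := R)
      ((hψ _).continuous.abs.rpow_const fun _ => Or.inr ht.le)
      ((hψc (R • e)).comp_left (g := fun w => |w| ^ t) (by simp [Real.zero_rpow ht.ne']))
      (fun x => by positivity) (by linarith) (by
        intro x hx
        have h1 : φ (x - R • e) ≠ 0 := fun h => hx (by simp [h, Real.zero_rpow ht.ne'])
        have h2 := htr R hR x (hφs _ h1).le
        exact ⟨h2.1, by linarith [h2.2]⟩) s).2
    rwa [integral_sub_right_eq_self (fun x => |φ x| ^ t)] at this
  have hBd : ∀ R : ℝ, 1 ≤ R → ∀ (s t : ℝ), 0 < t →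
      ∫ x, ‖x‖ ^ s * ‖fderiv ℝ φ (x - R • e)‖ ^ t ≤
        2 ^ |s| * R ^ s * ∫ x, ‖fderiv ℝ φ x‖ ^ t := by
    intro R hR s t ht
    have := (ckn_bounds (G := fun x => ‖fderiv ℝ φ (x - R • e)‖ ^ t) (R := R)
      ((hφ1.comp (continuous_id.sub continuous_const)).norm.rpow_const fun _ => Or.inr ht.le)
      ((hφ1c.comp_homeomorph (Homeomorph.subRight (R • e))).comp_left
        (g := fun w => ‖w‖ ^ t) (by simp [Real.zero_rpow ht.ne']))
      (fun x => by positivity) (by linarith) (by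
        intro x hx
        have h1 : fderiv ℝ φ (x - R • e) ≠ 0 :=
          fun h => hx (by simp [h, Real.zero_rpow ht.ne'])
        have h2 := htr R hR x (hφd _ h1)
        exact ⟨h2.1, by linarith [h2.2]⟩) s).2.2
    rwa [integral_sub_right_eq_self (fun x => ‖fderiv ℝ φ x‖ ^ t)] at this
  constructor
  · suffices h : γ ≤ a * α + (1 - a) * β by linarith
    set G1 := ∫ x, |φ x| ^ r
    set G2 := ∫ x, ‖fderiv ℝ φ x‖ ^ p
    set G3 := ∫ x, |φ x| ^ q
    refine ckn_growth (K := (2 ^ (-|γ * r|) * G1) ^ (1 / r))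
      (L := c * (2 ^ |α * p| * G2) ^ (a / p) * (2 ^ |β * q| * G3) ^ ((1 - a) / q))
      (by positivity) ?_
    intro N hN
    have hN0 : (0 : ℝ) < N := by positivity
    have hN1 : (1 : ℝ) ≤ N := by exact_mod_cast (by omega : 1 ≤ N)
    have h0 := hineq _ (hψ ((N : ℝ) • e)) (hψc ((N : ℝ) • e))
    simp only [hψd] at h0
    have h1 := (hB N hN1 (γ * r) r hr).1
    have h2 := hBd N hN1 (α * p) p hp0
    have h3 := (hB N hN1 (β * q) q hq0).2
    have e1 : (2 ^ (-|γ * r|) * (N : ℝ) ^ (γ * r) * G1) ^ (1 / r) =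
        (2 ^ (-|γ * r|) * G1) ^ (1 / r) * (N : ℝ) ^ γ := by
      rw [mul_right_comm, Real.mul_rpow (by positivity) (by positivity),
        ← Real.rpow_mul hN0.le]
      congr 2; field_simp
    have e2 : (2 ^ |α * p| * (N : ℝ) ^ (α * p) * G2) ^ (a / p) =
        (2 ^ |α * p| * G2) ^ (a / p) * (N : ℝ) ^ (a * α) := by
      rw [mul_right_comm, Real.mul_rpow (by positivity) (by positivity),
        ← Real.rpow_mul hN0.le]
      congr 2; field_simp
    have e3 : (2 ^ |β * q| * (N : ℝ) ^ (β * q) * G3) ^ ((1 - a) / q) =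
        (2 ^ |β * q| * G3) ^ ((1 - a) / q) * (N : ℝ) ^ ((1 - a) * β) := by
      rw [mul_right_comm, Real.mul_rpow (by positivity) (by positivity),
        ← Real.rpow_mul hN0.le]
      congr 2; field_simp
    rw [← e1, Real.rpow_add hN0]
    have hJ2 : 0 ≤ ∫ x, ‖x‖ ^ (α * p) * ‖fderiv ℝ φ (x - (N : ℝ) • e)‖ ^ p :=
      integral_nonneg fun x => by positivity
    have hJ3 : 0 ≤ ∫ x, ‖x‖ ^ (β * q) * |φ (x - (N : ℝ) • e)| ^ q :=
      integral_nonneg fun x => by positivity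
    have ha' : 0 ≤ (1 - a) / q := div_nonneg (by linarith) hq0.le
    have h1' := (Real.rpow_le_rpow (by positivity) h1 (by positivity : 0 ≤ 1 / r)).trans h0
    have h2' := Real.rpow_le_rpow hJ2 h2 (by positivity : 0 ≤ a / p)
    have h3' := Real.rpow_le_rpow hJ3 h3 ha'
    refine h1'.trans ((mul_le_mul (mul_le_mul_of_nonneg_left h2' hc.le) h3'
      (Real.rpow_nonneg hJ3 _) (by positivity)).trans (le_of_eq ?_))
    rw [e2, e3]; ring
  · intro hcase
    have hA : γ + n / r = α - 1 + n / p := by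
      field_simp at hcase ⊢
      linarith
    have hAB : a = 1 ∨ γ + n / r = β + n / q := by
      by_cases h : a = 1
      · exact Or.inl h
      · right
        have h' : 1 - a ≠ 0 := fun h2 => h (by linarith)
        apply mul_left_cancel₀ h'
        rw [← hA] at hbal
        linarith
    suffices h : 1 / r ≤ a / p + (1 - a) / q by
      have h1 := mul_le_mul_of_nonneg_left h hn0.le
      have h2 : -γ + a * α + (1 - a) * β = n / r + a - n * (a / p + (1 - a) / q) := by
        have e1 : (n : ℝ) * (a / p + (1 - a) / q) = a * (n / p) + (1 - a) * (n / q) := by ring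
        rw [e1]; linarith
      have h3 : (n : ℝ) * (1 / r) = n / r := by ring
      linarith
    set A := γ + n / r with hAdef
    set ψ : EuclideanSpace ℝ (Fin n) → ℝ := fun x => φ (x - (1 : ℝ) • e) with hψdef
    have hψs : ContDiff ℝ (⊤ : ℕ∞) ψ := hψ _
    have hψcs : HasCompactSupport ψ := hψc _
    have hψsupp : ∀ x, ψ x ≠ 0 → 1 / 2 ≤ ‖x‖ ∧ ‖x‖ < 2 := by
      intro x hx
      have := htr 1 le_rfl x (hφs _ hx).le
      exact ⟨this.1, by linarith [this.2]⟩
    have hψdsupp : ∀ x, fderiv ℝ ψ x ≠ 0 → 1 / 2 ≤ ‖x‖ ∧ ‖x‖ < 2 := by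
      intro x hx
      rw [hψdef, hψd] at hx
      have := htr 1 le_rfl x (hφd _ hx)
      exact ⟨this.1, by linarith [this.2]⟩
    have hI1 : 0 < ∫ x, ‖x‖ ^ (γ * r) * ‖ψ x‖ ^ r := by
      refine lt_of_lt_of_le ?_ (hB 1 le_rfl (γ * r) r hr).1
      exact mul_pos (mul_pos (Real.rpow_pos_of_pos two_pos _)
        (Real.rpow_pos_of_pos one_pos _)) hG1
    clear hB hBd hψd hψ hψc
    clear_value ψ
    have hI2 : 0 ≤ ∫ x, ‖x‖ ^ (α * p) * ‖fderiv ℝ ψ x‖ ^ p :=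
      integral_nonneg fun x => by positivity
    have hI3 : 0 ≤ ∫ x, ‖x‖ ^ (β * q) * ‖ψ x‖ ^ q :=
      integral_nonneg fun x => by positivity
    set I1 := ∫ x, ‖x‖ ^ (γ * r) * ‖ψ x‖ ^ r
    set I2 := ∫ x, ‖x‖ ^ (α * p) * ‖fderiv ℝ ψ x‖ ^ p
    set I3 := ∫ x, ‖x‖ ^ (β * q) * ‖ψ x‖ ^ q
    refine ckn_growth (K := I1 ^ (1 / r)) (L := c * I2 ^ (a / p) * I3 ^ ((1 - a) / q))
      (Real.rpow_pos_of_pos hI1 _) ?_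
    intro N hN
    have hN0 : (0 : ℝ) < N := by positivity
    have hterm : ∀ k : ℕ, ContDiff ℝ (⊤ : ℕ∞)
        (fun x => ((4 : ℝ) ^ k) ^ A • ψ ((4 : ℝ) ^ k • x)) := fun k =>
      (hψs.comp (contDiff_const_smul _)).const_smul _
    have hf : ContDiff ℝ (⊤ : ℕ∞)
        (fun x => ∑ k ∈ Finset.range N, ((4 : ℝ) ^ k) ^ A • ψ ((4 : ℝ) ^ k • x)) :=
      ContDiff.sum fun k _ => hterm k
    have hfc : HasCompactSupport
        (fun x => ∑ k ∈ Finset.range N, ((4 : ℝ) ^ k) ^ A • ψ ((4 : ℝ) ^ k • x)) := by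
      refine HasCompactSupport.of_support_subset_isCompact
        (isCompact_closedBall (0 : EuclideanSpace ℝ (Fin n)) 2) ?_
      intro x hx
      obtain ⟨k, -, hk⟩ := Finset.exists_ne_zero_of_sum_ne_zero hx
      have h1 := (hψsupp _ (right_ne_zero_of_smul hk)).2
      rw [norm_smul, norm_pow, Real.norm_of_nonneg (by norm_num : (0 : ℝ) ≤ 4)] at h1
      have h2 : (1 : ℝ) ≤ 4 ^ k := one_le_pow₀ (by norm_num)
      have h3 := mul_le_mul_of_nonneg_right h2 (norm_nonneg x)
      rw [mem_closedBall_zero_iff]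
      linarith
    have hfd : ∀ x, fderiv ℝ
        (fun x => ∑ k ∈ Finset.range N, ((4 : ℝ) ^ k) ^ A • ψ ((4 : ℝ) ^ k • x)) x =
        ∑ k ∈ Finset.range N, ((4 : ℝ) ^ k) ^ (A + 1) • fderiv ℝ ψ ((4 : ℝ) ^ k • x) := by
      intro x
      rw [fderiv_fun_sum fun k _ => ((hterm k).differentiable (by simp)).differentiableAt]
      refine Finset.sum_congr rfl fun k _ => ?_
      have hc4 : (0 : ℝ) < 4 ^ k := by positivity
      have hd : DifferentiableAt ℝ (fun x => ψ ((4 : ℝ) ^ k • x)) x :=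
        ((hψs.comp (contDiff_const_smul _)).differentiable (by simp)).differentiableAt
      rw [fderiv_fun_const_smul hd, fderiv_comp_smul, smul_smul, Real.rpow_add_one hc4.ne']
    have h0 := hineq _ hf hfc
    simp only [hfd, ← Real.norm_eq_abs] at h0
    rw [ckn_scale hψs.continuous hψcs hψsupp hr (by rw [hAdef]; field_simp),
      ckn_scale (hψs.continuous_fderiv (by simp)) (hψcs.fderiv ℝ) hψdsupp hp0
        (by rw [hA]; field_simp; ring)] at h0
    have h3 : (∫ x, ‖x‖ ^ (β * q) *
        ‖∑ k ∈ Finset.range N, ((4 : ℝ) ^ k) ^ A • ψ ((4 : ℝ) ^ k • x)‖ ^ q) ^ ((1 - a) / q)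
        = (N * I3) ^ ((1 - a) / q) := by
      rcases hAB with h | h
      · simp [h]
      · rw [ckn_scale hψs.continuous hψcs hψsupp hq0 (by rw [h]; field_simp)]
    rw [h3, Real.mul_rpow hN0.le hI1.le, Real.mul_rpow hN0.le hI2,
      Real.mul_rpow hN0.le hI3] at h0
    rw [Real.rpow_add hN0]
    linarith
end

section
/- Let 1 < p ≤ q < ∞ and let p' = p/(p-1). Let u, v : (0,∞) → [0,∞) be measurable. Then there exists a constant c > 0 such that (∫₀^∞ [u(x) ∫₀^x f(t) dt]^{q} dx)^{1/q} ≤ c (∫₀^∞ [f(x) v(x)]^{p} dx)^{1/p} holds for all non-negative measurable f : (0,∞) → [0,∞) if and only if sup_{r>0} (∫_r^∞ u(x)^{q} dx)^{1/q} (∫₀^r v(x)^{-p'} dx)^{1/p'} < ∞. -/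
open MeasureTheory Set ENNReal

lemma aux_up (S : Set ℝ) (g : ℝ → ℝ≥0∞) (C : ℝ≥0∞)
    (h : ∀ x ∈ S, ∫⁻ t in S ∩ Ioi x, g t ≤ C) : ∫⁻ t in S, g t ≤ C := by
  obtain ⟨T, hTS, hTc, hT⟩ := TopologicalSpace.isOpen_biUnion_countable S (fun x : ℝ => Ioi x)
    (fun _ _ => isOpen_Ioi)
  have : Countable T := hTc.to_subtype
  have hsub : S ⊆ (⋃ i : T, S ∩ Ioi (i : ℝ)) ∪ (S \ ⋃ i ∈ S, Ioi i) := by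
    intro y hy
    by_cases hy' : y ∈ ⋃ i ∈ S, Ioi i
    · left
      rw [← hT] at hy'
      simp only [mem_iUnion] at hy' ⊢
      obtain ⟨i, hi, hyi⟩ := hy'
      exact ⟨⟨i, hi⟩, hy, hyi⟩
    · right; exact ⟨hy, hy'⟩
  have hss : (S \ ⋃ i ∈ S, Ioi i).Subsingleton := by
    rintro a ⟨ha, ha'⟩ b ⟨hb, hb'⟩
    simp only [mem_iUnion, mem_Ioi, not_exists, not_lt] at ha' hb'
    exact le_antisymm (ha' b hb) (hb' a ha)
  have hz : ∫⁻ t in (S \ ⋃ i ∈ S, Ioi i), g t = 0 :=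
    setLIntegral_measure_zero _ _ (hss.measure_zero _)
  calc ∫⁻ t in S, g t ≤ ∫⁻ t in (⋃ i : T, S ∩ Ioi (i : ℝ)) ∪ (S \ ⋃ i ∈ S, Ioi i), g t :=
        lintegral_mono_set hsub
    _ ≤ _ := lintegral_union_le _ _ _
    _ = ⨆ i : T, ∫⁻ t in S ∩ Ioi (i : ℝ), g t := by
        rw [hz, add_zero, setLIntegral_iUnion_of_directed]
        intro a b
        rcases le_total (a : ℝ) b with hab | hab
        · exact ⟨a, subset_rfl, inter_subset_inter_right _ (Ioi_subset_Ioi hab)⟩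
        · exact ⟨b, inter_subset_inter_right _ (Ioi_subset_Ioi hab), subset_rfl⟩
    _ ≤ C := iSup_le fun i => h i (hTS i.2)

lemma aux_down (S : Set ℝ) (g : ℝ → ℝ≥0∞) (C : ℝ≥0∞)
    (h : ∀ x ∈ S, ∫⁻ t in S ∩ Iio x, g t ≤ C) : ∫⁻ t in S, g t ≤ C := by
  obtain ⟨T, hTS, hTc, hT⟩ := TopologicalSpace.isOpen_biUnion_countable S (fun x : ℝ => Iio x)
    (fun _ _ => isOpen_Iio)
  have : Countable T := hTc.to_subtype
  have hsub : S ⊆ (⋃ i : T, S ∩ Iio (i : ℝ)) ∪ (S \ ⋃ i ∈ S, Iio i) := by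
    intro y hy
    by_cases hy' : y ∈ ⋃ i ∈ S, Iio i
    · left
      rw [← hT] at hy'
      simp only [mem_iUnion] at hy' ⊢
      obtain ⟨i, hi, hyi⟩ := hy'
      exact ⟨⟨i, hi⟩, hy, hyi⟩
    · right; exact ⟨hy, hy'⟩
  have hss : (S \ ⋃ i ∈ S, Iio i).Subsingleton := by
    rintro a ⟨ha, ha'⟩ b ⟨hb, hb'⟩
    simp only [mem_iUnion, mem_Iio, not_exists, not_lt] at ha' hb'
    exact le_antisymm (hb' a ha) (ha' b hb)
  have hz : ∫⁻ t in (S \ ⋃ i ∈ S, Iio i), g t = 0 :=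
    setLIntegral_measure_zero _ _ (hss.measure_zero _)
  calc ∫⁻ t in S, g t ≤ ∫⁻ t in (⋃ i : T, S ∩ Iio (i : ℝ)) ∪ (S \ ⋃ i ∈ S, Iio i), g t :=
        lintegral_mono_set hsub
    _ ≤ _ := lintegral_union_le _ _ _
    _ = ⨆ i : T, ∫⁻ t in S ∩ Iio (i : ℝ), g t := by
        rw [hz, add_zero, setLIntegral_iUnion_of_directed]
        intro a b
        rcases le_total (a : ℝ) b with hab | hab
        · exact ⟨b, inter_subset_inter_right _ (Iio_subset_Iio hab), subset_rfl⟩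
        · exact ⟨a, subset_rfl, inter_subset_inter_right _ (Iio_subset_Iio hab)⟩
    _ ≤ C := iSup_le fun i => h i (hTS i.2)

lemma tsum_rpow_le' {ι : Type*} (a : ι → ℝ≥0∞) (s : ℝ) (hs : 1 ≤ s) :
    ∑' i, a i ^ s ≤ (∑' i, a i) ^ s := by
  have key : ∀ x : ℝ≥0∞, x ^ s = x * x ^ (s - 1) := by
    intro x
    conv_lhs => rw [show s = 1 + (s - 1) by ring]
    rw [ENNReal.rpow_add_of_nonneg _ _ (by norm_num) (by linarith), ENNReal.rpow_one]
  calc ∑' i, a i ^ s = ∑' i, a i * a i ^ (s - 1) := by simp_rw [key]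
    _ ≤ ∑' i, a i * (∑' i, a i) ^ (s - 1) := by
        refine ENNReal.tsum_le_tsum fun i => ?_
        gcongr
        exact ENNReal.le_tsum i
    _ = _ := by rw [ENNReal.tsum_mul_right, ← key]

lemma conj_aux (p : ℝ) (hp : 1 < p) : p.HolderConjugate (p / (p - 1)) :=
  Real.HolderConjugate.conjExponent hp

/-- The local estimate: Hölder plus the Bradley condition at one point. -/
lemma key_est (p : ℝ) (hp : 1 < p) (g w : ℝ → ℝ≥0∞) (hg : Measurable g) (hw : Measurable w)
    (hwt : ∀ x, w x ≠ ∞) (U B : ℝ≥0∞) (hB : B ≠ ∞) (x : ℝ)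
    (h : U * (∫⁻ x in Ioc (0 : ℝ) x, w x ^ (-(p / (p - 1)))) ^ ((p - 1) / p) ≤ B)
    (D : Set ℝ) :
    (∫⁻ t in D ∩ Ioc 0 x, g t) * U ≤ B * (∫⁻ t in D, (g t * w t) ^ p) ^ (1 / p) := by
  have hp0 : 0 < p := by linarith
  have hp1 : 0 < p - 1 := by linarith
  set V := ∫⁻ x in Ioc (0 : ℝ) x, w x ^ (-(p / (p - 1))) with hV
  by_cases hVt : V = ∞
  · have : U = 0 := by
      by_contra hU
      rw [hVt, ENNReal.top_rpow_of_pos (by positivity), ENNReal.mul_top hU] at h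
      exact hB (top_le_iff.1 h)
    simp [this]
  have hae : ∀ᵐ t ∂(volume.restrict (Ioc (0 : ℝ) x)), w t ^ (-(p / (p - 1))) < ∞ :=
    ae_lt_top (by fun_prop) hVt
  have hae2 : ∀ᵐ t ∂(volume.restrict (D ∩ Ioc (0 : ℝ) x)), w t ^ (-(p / (p - 1))) < ∞ :=
    ae_restrict_of_ae_restrict_of_subset inter_subset_right hae
  have h1 : ∫⁻ t in D ∩ Ioc 0 x, g t
      = ∫⁻ t in D ∩ Ioc 0 x, ((fun t => g t * w t) * (fun t => (w t)⁻¹)) t := by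
    refine lintegral_congr_ae ?_
    filter_upwards [hae2] with t ht
    have : w t ≠ 0 := by
      intro h0
      rw [h0, ENNReal.zero_rpow_of_neg (by simp; positivity)] at ht
      exact lt_irrefl _ ht
    simp only [Pi.mul_apply]
    rw [mul_assoc, ENNReal.mul_inv_cancel this (hwt t), mul_one]
  have h2 := ENNReal.lintegral_mul_le_Lp_mul_Lq (volume.restrict (D ∩ Ioc (0 : ℝ) x))
    (conj_aux p hp) (f := fun t => g t * w t) (g := fun t => (w t)⁻¹)
    (by fun_prop) (by fun_prop)
  rw [← h1] at h2
  have h3 : (∫⁻ t in D ∩ Ioc 0 x, (w t)⁻¹ ^ (p / (p - 1))) ≤ V := by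
    rw [hV]
    refine (lintegral_mono_set inter_subset_right).trans (le_of_eq ?_)
    refine lintegral_congr fun t => ?_
    rw [ENNReal.rpow_neg, ENNReal.inv_rpow]
  have h4 : (∫⁻ t in D ∩ Ioc 0 x, (g t * w t) ^ p) ≤ ∫⁻ t in D, (g t * w t) ^ p :=
    lintegral_mono_set inter_subset_left
  have e1 : 1 / (p / (p - 1)) = (p - 1) / p := by field_simp
  rw [e1] at h2
  calc (∫⁻ t in D ∩ Ioc 0 x, g t) * U
      ≤ ((∫⁻ t in D, (g t * w t) ^ p) ^ (1 / p) * V ^ ((p - 1) / p)) * U := by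
        gcongr
        refine h2.trans ?_
        gcongr
    _ = (U * V ^ ((p - 1) / p)) * (∫⁻ t in D, (g t * w t) ^ p) ^ (1 / p) := by ring
    _ ≤ _ := by gcongr

lemma suff (p q : ℝ) (hp : 1 < p) (hpq : p ≤ q) (g u w : ℝ → ℝ≥0∞) (hg : Measurable g)
    (hu : Measurable u) (hw : Measurable w)
    (hwt : ∀ x, w x ≠ ∞) (B : ℝ≥0∞) (hB : B ≠ ∞)
    (h : ∀ x > 0, (∫⁻ x in Ioi x, u x ^ q) ^ (1 / q) *
      (∫⁻ x in Ioc (0 : ℝ) x, w x ^ (-(p / (p - 1)))) ^ ((p - 1) / p) ≤ B)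
    (hN : ∫⁻ x in Ioi (0 : ℝ), (g x * w x) ^ p ≠ ∞) :
    (∫⁻ x in Ioi (0 : ℝ), (u x * ∫⁻ t in Ioc (0 : ℝ) x, g t) ^ q) ^ (1 / q) ≤
      8 * B * (∫⁻ x in Ioi (0 : ℝ), (g x * w x) ^ p) ^ (1 / p) := by
  have hp0 : 0 < p := by linarith
  have hq0 : 0 < q := by linarith
  set N := ∫⁻ x in Ioi (0 : ℝ), (g x * w x) ^ p with hNdef
  set F : ℝ → ℝ≥0∞ := fun x => ∫⁻ t in Ioc (0 : ℝ) x, g t with hF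
  have hFmono : Monotone F := fun a b hab => lintegral_mono_set (Ioc_subset_Ioc_right hab)
  have hFm : Measurable F := hFmono.measurable
  have h20 : (2 : ℝ≥0∞) ≠ 0 := by norm_num
  have h2t : (2 : ℝ≥0∞) ≠ ∞ := by norm_num
  let E : ℤ → Set ℝ := fun k => Ioi 0 ∩ {x | (2 : ℝ≥0∞) ^ k ≤ F x ∧ F x < 2 ^ (k + 1)}
  have hEm : ∀ k, MeasurableSet (E k) := fun k =>
    measurableSet_Ioi.inter ((measurableSet_le measurable_const hFm).inter
      (measurableSet_lt hFm measurable_const))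
  have hEd : Pairwise (Function.onFun Disjoint E) := by
    have aux : ∀ i j : ℤ, i < j → Disjoint (E i) (E j) := by
      intro i j hij
      rw [Set.disjoint_left]
      rintro x ⟨_, _, h1⟩ ⟨_, h2, _⟩
      have : (2 : ℝ≥0∞) ^ (i + 1) ≤ 2 ^ j := ENNReal.zpow_le_of_le (by norm_num) (by omega)
      exact absurd (h1.trans_le (this.trans h2)) (lt_irrefl _)
    intro i j hij
    rcases lt_or_gt_of_ne hij with h1 | h1
    · exact aux i j h1
    · exact (aux j i h1).symm
  let α : ℤ → ℝ≥0∞ := fun k => ∫⁻ t in E k, (g t * w t) ^ p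
  have hα : ∑' k, α k ≤ N := by
    rw [← lintegral_iUnion hEm hEd]
    exact lintegral_mono_set (iUnion_subset fun k => inter_subset_left)
  let β : ℤ → ℝ≥0∞ := fun k => α (k - 1) + α k
  have hβ : ∑' k, β k ≤ 2 * N := by
    have : ∑' k, α (k - 1) = ∑' k, α k := (Equiv.subRight (1 : ℤ)).tsum_eq α
    rw [ENNReal.tsum_add, this, two_mul]
    gcongr
  -- low part
  have hlow : ∀ a : ℝ≥0∞, ∫⁻ t in Ioi 0 ∩ {x | F x < a}, g t ≤ a := by
    intro a
    apply aux_down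
    rintro x ⟨_, hx⟩
    refine le_trans (lintegral_mono_set ?_) (le_of_lt hx)
    rintro y ⟨⟨hy, _⟩, hyx⟩
    exact ⟨hy, le_of_lt hyx⟩
  have hpw : ∀ k : ℤ, (2 : ℝ≥0∞) ^ k = 2 * 2 ^ (k - 1) := by
    intro k
    conv_lhs => rw [show k = 1 + (k - 1) by ring]
    rw [ENNReal.zpow_add h20 h2t, zpow_one]
  have hz0 : ∀ k : ℤ, (2 : ℝ≥0∞) ^ k ≠ 0 := fun k => (ENNReal.zpow_pos h20 h2t k).ne'
  have hzt : ∀ k : ℤ, (2 : ℝ≥0∞) ^ k ≠ ∞ := fun k => ENNReal.zpow_ne_top h20 h2t k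
  have hblock : ∀ k, ∀ x ∈ E k,
      (2 : ℝ≥0∞) ^ (k - 1) ≤ ∫⁻ t in (E (k - 1) ∪ E k) ∩ Ioc 0 x, g t := by
    rintro k x ⟨hx0, hx1, hx2⟩
    have hsub : Ioc 0 x ⊆ (Ioi 0 ∩ {x | F x < 2 ^ (k - 1)}) ∪ ((E (k - 1) ∪ E k) ∩ Ioc 0 x) := by
      intro y hy
      by_cases h1 : F y < 2 ^ (k - 1)
      · exact Or.inl ⟨hy.1, h1⟩
      · right
        refine ⟨?_, hy⟩
        by_cases h2 : F y < 2 ^ k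
        · left; exact ⟨hy.1, not_lt.1 h1, by simpa using h2⟩
        · right; exact ⟨hy.1, not_lt.1 h2, (hFmono hy.2).trans_lt hx2⟩
    have h1 : (2 : ℝ≥0∞) ^ (k - 1) + 2 ^ (k - 1) ≤
        2 ^ (k - 1) + ∫⁻ t in (E (k - 1) ∪ E k) ∩ Ioc 0 x, g t := by
      rw [← two_mul, ← hpw]
      refine hx1.trans ((lintegral_mono_set hsub).trans ((lintegral_union_le _ _ _).trans ?_))
      gcongr
      exact hlow _
    exact (ENNReal.add_le_add_iff_left (hzt _)).1 h1
  have hEu : ∀ k, ∫⁻ x in E k, u x ^ q ≤ (B * β k ^ (1 / p) / 2 ^ (k - 1)) ^ q := by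
    intro k
    apply aux_up
    intro x hx
    have h1 := key_est p hp g w hg hw hwt _ B hB x (h x hx.1) (E (k - 1) ∪ E k)
    have h2 : ∫⁻ t in E (k - 1) ∪ E k, (g t * w t) ^ p ≤ β k := lintegral_union_le _ _ _
    have h3 : (∫⁻ x in Ioi x, u x ^ q) ^ (1 / q) ≤ B * β k ^ (1 / p) / 2 ^ (k - 1) := by
      rw [ENNReal.le_div_iff_mul_le (Or.inl (hz0 _)) (Or.inl (hzt _)), mul_comm]
      calc _ ≤ (∫⁻ t in (E (k - 1) ∪ E k) ∩ Ioc 0 x, g t) * (∫⁻ x in Ioi x, u x ^ q) ^ (1 / q) := by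
            gcongr
            exact hblock k x hx
        _ ≤ _ := h1
        _ ≤ _ := by gcongr
    refine (lintegral_mono_set inter_subset_right).trans ?_
    rw [one_div, ENNReal.rpow_inv_le_iff hq0] at h3
    exact h3
  have hEF : ∀ k, ∫⁻ x in E k, (u x * F x) ^ q ≤ (4 * B) ^ q * β k ^ (q / p) := by
    intro k
    calc ∫⁻ x in E k, (u x * F x) ^ q ≤ ∫⁻ x in E k, ((2 : ℝ≥0∞) ^ (k + 1)) ^ q * u x ^ q := by
          refine setLIntegral_mono' (hEm k) fun x hx => ?_
          rw [ENNReal.mul_rpow_of_nonneg _ _ hq0.le, mul_comm]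
          gcongr
          exact hx.2.2.le
      _ = ((2 : ℝ≥0∞) ^ (k + 1)) ^ q * ∫⁻ x in E k, u x ^ q :=
          lintegral_const_mul _ (by fun_prop)
      _ ≤ ((2 : ℝ≥0∞) ^ (k + 1)) ^ q * (B * β k ^ (1 / p) / 2 ^ (k - 1)) ^ q := by
          gcongr
          exact hEu k
      _ = (4 * B * β k ^ (1 / p)) ^ q := by
          rw [← ENNReal.mul_rpow_of_nonneg _ _ hq0.le]
          congr 1
          have e : (2 : ℝ≥0∞) ^ (k + 1) = 4 * 2 ^ (k - 1) := by
            rw [hpw (k + 1), add_sub_cancel_right, hpw k, ← mul_assoc]; norm_num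
          rw [e, mul_assoc, ENNReal.mul_div_cancel (hz0 _) (hzt _), mul_assoc]
      _ = _ := by
          rw [ENNReal.mul_rpow_of_nonneg _ _ hq0.le, ← ENNReal.rpow_mul]
          congr 2
          field_simp
  -- infinite part
  have hinf : ∫⁻ x in Ioi 0 ∩ {x | F x = ∞}, u x ^ q = 0 := by
    rw [← nonpos_iff_eq_zero]
    apply aux_up
    rintro x ⟨hx0, hx⟩
    refine (lintegral_mono_set inter_subset_right).trans ?_
    have h1 := key_est p hp g w hg hw hwt _ B hB x (h x hx0) (Ioi 0)
    have e : Ioi (0 : ℝ) ∩ Ioc 0 x = Ioc 0 x := inter_eq_right.2 Ioc_subset_Ioi_self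
    have hx' : ∫⁻ t in Ioc (0 : ℝ) x, g t = ∞ := hx
    rw [e, hx'] at h1
    by_contra hne
    have hne' : (∫⁻ x in Ioi x, u x ^ q) ^ (1 / q) ≠ 0 := by
      intro h0
      rw [ENNReal.rpow_eq_zero_iff_of_pos (by positivity)] at h0
      exact hne h0.le
    rw [ENNReal.top_mul hne', top_le_iff] at h1
    exact ENNReal.mul_ne_top hB (ENNReal.rpow_ne_top_of_nonneg (by positivity) hN) h1
  have hinf2 : ∫⁻ x in Ioi 0 ∩ {x | F x = ∞}, (u x * F x) ^ q = 0 := by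
    have hm : Measurable fun x => u x ^ q := by fun_prop
    rw [lintegral_eq_zero_iff hm] at hinf
    rw [lintegral_eq_zero_iff (by fun_prop)]
    filter_upwards [hinf] with x hx
    have : u x = 0 := by
      simpa [hq0, hq0.le, not_lt.2 hq0.le] using hx
    simp [this, hq0]
  have hzero : ∫⁻ x in Ioi 0 ∩ {x | F x = 0}, (u x * F x) ^ q = 0 := by
    have hm : MeasurableSet (Ioi (0 : ℝ) ∩ {x | F x = 0}) :=
      measurableSet_Ioi.inter (hFm (measurableSet_singleton 0))
    rw [setLIntegral_congr_fun (g := fun _ => 0) hm]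
    · simp
    · rintro x ⟨_, hx⟩
      have hx' : F x = 0 := hx
      simp [hx', hq0]
  have hcover : Ioi (0 : ℝ) ⊆ (⋃ k, E k) ∪
      ((Ioi 0 ∩ {x | F x = ∞}) ∪ (Ioi 0 ∩ {x | F x = 0})) := by
    intro x hx
    by_cases h0 : F x = 0
    · exact Or.inr (Or.inr ⟨hx, h0⟩)
    by_cases ht : F x = ∞
    · exact Or.inr (Or.inl ⟨hx, ht⟩)
    obtain ⟨k, hk⟩ := ENNReal.exists_mem_Ico_zpow h0 ht (y := 2) (by norm_num) h2t
    exact Or.inl (mem_iUnion.2 ⟨k, hx, hk.1, hk.2⟩)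
  have hmain : ∫⁻ x in Ioi 0, (u x * F x) ^ q ≤ (4 * B) ^ q * (2 * N) ^ (q / p) := by
    calc ∫⁻ x in Ioi 0, (u x * F x) ^ q
        ≤ ∫⁻ x in (⋃ k, E k), (u x * F x) ^ q := by
          refine (lintegral_mono_set hcover).trans ((lintegral_union_le _ _ _).trans ?_)
          have := lintegral_union_le (μ := volume) (fun x => (u x * F x) ^ q)
            (Ioi 0 ∩ {x | F x = ∞}) (Ioi 0 ∩ {x | F x = 0})
          rw [hinf2, hzero, add_zero, nonpos_iff_eq_zero] at this
          rw [this, add_zero]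
      _ ≤ ∑' k, ∫⁻ x in E k, (u x * F x) ^ q := lintegral_iUnion_le _ _
      _ ≤ ∑' k, (4 * B) ^ q * β k ^ (q / p) := ENNReal.tsum_le_tsum hEF
      _ = (4 * B) ^ q * ∑' k, β k ^ (q / p) := ENNReal.tsum_mul_left
      _ ≤ (4 * B) ^ q * (2 * N) ^ (q / p) := by
          gcongr
          refine (tsum_rpow_le' _ _ ((one_le_div hp0).2 hpq)).trans ?_
          gcongr
  calc (∫⁻ x in Ioi 0, (u x * F x) ^ q) ^ (1 / q)
      ≤ ((4 * B) ^ q * (2 * N) ^ (q / p)) ^ (1 / q) := by gcongr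
    _ = 4 * B * (2 * N) ^ (1 / p) := by
        rw [ENNReal.mul_rpow_of_nonneg _ _ (by positivity), ← ENNReal.rpow_mul, ← ENNReal.rpow_mul,
          mul_one_div_cancel hq0.ne', ENNReal.rpow_one]
        congr 2
        field_simp
    _ = 4 * B * (2 ^ (1 / p) * N ^ (1 / p)) := by
        rw [ENNReal.mul_rpow_of_nonneg _ _ (by positivity)]
    _ ≤ 4 * B * (2 * N ^ (1 / p)) := by
        gcongr
        calc (2 : ℝ≥0∞) ^ (1 / p) ≤ 2 ^ (1 : ℝ) := by
              apply ENNReal.rpow_le_rpow_of_exponent_le (by norm_num)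
              rw [div_le_one hp0]; exact hp.le
          _ = 2 := ENNReal.rpow_one _
    _ = 8 * B * N ^ (1 / p) := by ring

lemma nec (p q : ℝ) (hp : 1 < p) (hpq : p ≤ q)
    (u v : ℝ → ℝ) (hu : Measurable u) (hv : Measurable v)
    (c : ℝ) (hc : 0 < c)
    (H : ∀ f : ℝ → ℝ, Measurable f → (∀ x ∈ Ioi (0 : ℝ), 0 ≤ f x) →
      (∫⁻ x in Ioi (0 : ℝ),
          (ENNReal.ofReal (u x) * ∫⁻ t in Ioc (0 : ℝ) x, ENNReal.ofReal (f t)) ^ q) ^ (1 / q) ≤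
        ENNReal.ofReal c *
          (∫⁻ x in Ioi (0 : ℝ), (ENNReal.ofReal (f x) * ENNReal.ofReal (v x)) ^ p) ^ (1 / p))
    (hv0 : ∀ x ∈ Ioi (0 : ℝ), 0 ≤ v x)
    (r : ℝ) (hr : 0 < r) :
      (∫⁻ x in Ioi r, ENNReal.ofReal (u x) ^ q) ^ (1 / q) *
        (∫⁻ x in Ioc (0 : ℝ) r, ENNReal.ofReal (v x) ^ (-(p / (p - 1)))) ^ ((p - 1) / p)
        ≤ ENNReal.ofReal c := by
  have hp0 : 0 < p := by linarith
  have hp1 : 0 < p - 1 := by linarith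
  have hq0 : 0 < q := by linarith
  set U := (∫⁻ x in Ioi r, ENNReal.ofReal (u x) ^ q) ^ (1 / q) with hU
  -- test with `f` restricted to a set `A`
  have test : ∀ (A : Set ℝ), MeasurableSet A → A ⊆ Ioc 0 r → ∀ f : ℝ → ℝ, Measurable f →
      (∀ x, 0 ≤ f x) → U * ∫⁻ t in A, ENNReal.ofReal (f t) ≤ ENNReal.ofReal c *
        (∫⁻ x in A, (ENNReal.ofReal (f x) * ENNReal.ofReal (v x)) ^ p) ^ (1 / p) := by
    intro A hA hAr f hf hf0
    have h1 := H (A.indicator f) (hf.indicator hA) (fun x _ => indicator_nonneg (fun x _ => hf0 x) x)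
    have e1 : ∀ t, ENNReal.ofReal (A.indicator f t)
        = A.indicator (fun t => ENNReal.ofReal (f t)) t := by
      intro t
      by_cases ht : t ∈ A <;> simp [ht]
    have e2 : ∀ t, (ENNReal.ofReal (A.indicator f t) * ENNReal.ofReal (v t)) ^ p
        = A.indicator (fun t => (ENNReal.ofReal (f t) * ENNReal.ofReal (v t)) ^ p) t := by
      intro t
      by_cases ht : t ∈ A <;> simp [ht, hp0]
    have hA0 : A ⊆ Ioi 0 := hAr.trans Ioc_subset_Ioi_self
    rw [lintegral_congr e2, setLIntegral_indicator hA, inter_eq_left.2 hA0] at h1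
    refine le_trans ?_ h1
    set I := ∫⁻ t in A, ENNReal.ofReal (f t)
    have hlow : ∫⁻ x in Ioi r, ENNReal.ofReal (u x) ^ q * I ^ q ≤ ∫⁻ x in Ioi (0 : ℝ),
          (ENNReal.ofReal (u x) * ∫⁻ t in Ioc (0 : ℝ) x, ENNReal.ofReal (A.indicator f t)) ^ q := by
      refine le_trans ?_ (lintegral_mono_set (Ioi_subset_Ioi hr.le))
      refine setLIntegral_mono' measurableSet_Ioi fun x hx => ?_
      rw [← ENNReal.mul_rpow_of_nonneg _ _ hq0.le]
      gcongr
      rw [lintegral_congr e1, setLIntegral_indicator hA,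
        inter_eq_left.2 (hAr.trans (Ioc_subset_Ioc_right (le_of_lt hx)))]
    rw [lintegral_mul_const _ (by fun_prop)] at hlow
    calc U * I = ((∫⁻ x in Ioi r, ENNReal.ofReal (u x) ^ q) * I ^ q) ^ (1 / q) := by
          rw [ENNReal.mul_rpow_of_nonneg _ _ (by positivity), ← ENNReal.rpow_mul,
            mul_one_div_cancel hq0.ne', ENNReal.rpow_one]
      _ ≤ _ := by gcongr
  by_cases hU0 : U = 0
  · simp [hU0]
  -- the zero set of `v` is null
  let Z : Set ℝ := Ioc 0 r ∩ {x | v x = 0}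
  have hZm : MeasurableSet Z := measurableSet_Ioc.inter (hv (measurableSet_singleton 0))
  have hZ : volume Z = 0 := by
    have h1 := test Z hZm inter_subset_left (fun _ => 1) measurable_const (fun _ => zero_le_one)
    have h2 : ∫⁻ x in Z, (ENNReal.ofReal 1 * ENNReal.ofReal (v x)) ^ p = 0 := by
      rw [setLIntegral_congr_fun (g := fun _ => 0) hZm]
      · simp
      · rintro x ⟨_, hx⟩
        have hx' : v x = 0 := hx
        simp [hx', hp0]
    rw [h2, ENNReal.zero_rpow_of_pos (by positivity), mul_zero, nonpos_iff_eq_zero] at h1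
    simpa [hU0] using h1
  let A : ℕ → Set ℝ := fun n => Ioc 0 r ∩ {x | 1 / ((n : ℝ) + 1) ≤ v x}
  have hAm : ∀ n, MeasurableSet (A n) := fun n =>
    measurableSet_Ioc.inter (measurableSet_le measurable_const hv)
  have hApos : ∀ n, ∀ x ∈ A n, 0 < v x := by
    rintro n x ⟨_, hx⟩
    have : 0 < 1 / ((n : ℝ) + 1) := by positivity
    exact this.trans_le hx
  have hAmono : Monotone A := by
    intro m n hmn
    refine inter_subset_inter_right _ fun x hx => ?_
    have hx' : 1 / ((m : ℝ) + 1) ≤ v x := hx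
    exact (Nat.one_div_le_one_div hmn).trans hx'
  have hcover : Ioc 0 r ⊆ (⋃ n, A n) ∪ Z := by
    intro x hx
    rcases (hv0 x hx.1).eq_or_lt with h0 | h0
    · exact Or.inr ⟨hx, h0.symm⟩
    · obtain ⟨n, hn⟩ := exists_nat_one_div_lt h0
      exact Or.inl (mem_iUnion.2 ⟨n, hx, hn.le⟩)
  have hAn : ∀ n, U * (∫⁻ x in A n, ENNReal.ofReal (v x) ^ (-(p / (p - 1)))) ^ ((p - 1) / p)
      ≤ ENNReal.ofReal c := by
    intro n
    have h1 := test (A n) (hAm n) inter_subset_left (fun x => |v x| ^ (-(p / (p - 1))))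
      (by fun_prop) (fun x => by positivity)
    have e1 : ∀ x ∈ A n, ENNReal.ofReal (|v x| ^ (-(p / (p - 1))))
        = ENNReal.ofReal (v x) ^ (-(p / (p - 1))) := by
      intro x hx
      rw [abs_of_pos (hApos n x hx), ENNReal.ofReal_rpow_of_pos (hApos n x hx)]
    have e2 : ∀ x ∈ A n, (ENNReal.ofReal (|v x| ^ (-(p / (p - 1)))) * ENNReal.ofReal (v x)) ^ p
        = ENNReal.ofReal (v x) ^ (-(p / (p - 1))) := by
      intro x hx
      have hvx := hApos n x hx
      rw [e1 x hx]
      nth_rewrite 2 [← ENNReal.rpow_one (ENNReal.ofReal (v x))]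
      rw [← ENNReal.rpow_add _ _ (by simpa using hvx) ENNReal.ofReal_ne_top, ← ENNReal.rpow_mul]
      congr 1
      field_simp
      ring
    rw [setLIntegral_congr_fun (hAm n) e1, setLIntegral_congr_fun (hAm n) e2] at h1
    set J := ∫⁻ x in A n, ENNReal.ofReal (v x) ^ (-(p / (p - 1))) with hJ
    have hJt : J ≠ ∞ := by
      have hle : J ≤ ∫⁻ x in A n, ENNReal.ofReal (1 / ((n : ℝ) + 1)) ^ (-(p / (p - 1))) := by
        refine setLIntegral_mono' (hAm n) fun x hx => ?_
        rw [ENNReal.rpow_neg, ENNReal.rpow_neg]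
        gcongr
        exact hx.2
      refine ne_top_of_le_ne_top ?_ hle
      rw [setLIntegral_const]
      refine ENNReal.mul_ne_top ?_ ?_
      · rw [ENNReal.ofReal_rpow_of_pos (by positivity)]
        exact ENNReal.ofReal_ne_top
      · refine ne_top_of_le_ne_top ?_ (measure_mono inter_subset_left)
        simp
    by_cases hJ0 : J = 0
    · rw [hJ0, ENNReal.zero_rpow_of_pos (by positivity)]; simp
    have hs : J = J ^ ((p - 1) / p) * J ^ (1 / p) := by
      rw [← ENNReal.rpow_add _ _ hJ0 hJt]
      have : (p - 1) / p + 1 / p = 1 := by field_simp; ring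
      rw [this, ENNReal.rpow_one]
    have h2 : (U * J ^ ((p - 1) / p)) * J ^ (1 / p) ≤ ENNReal.ofReal c * J ^ (1 / p) := by
      rw [mul_assoc, ← hs]; exact h1
    refine (ENNReal.mul_le_mul_iff_left ?_ ?_).1 h2
    · simp [hJ0, hJt]
    · exact ENNReal.rpow_ne_top_of_nonneg (by positivity) hJt
  have hc0 : ENNReal.ofReal c ≠ 0 := by simpa using hc
  have hs0 : 0 < (p - 1) / p := by positivity
  rw [mul_comm, ← ENNReal.le_div_iff_mul_le (Or.inr hc0) (Or.inr ENNReal.ofReal_ne_top),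
    ← ENNReal.le_rpow_inv_iff hs0]
  have hfin : ∀ n, ∫⁻ x in A n, ENNReal.ofReal (v x) ^ (-(p / (p - 1)))
      ≤ (ENNReal.ofReal c / U) ^ ((p - 1) / p)⁻¹ := by
    intro n
    rw [ENNReal.le_rpow_inv_iff hs0,
      ENNReal.le_div_iff_mul_le (Or.inr hc0) (Or.inr ENNReal.ofReal_ne_top), mul_comm]
    exact hAn n
  refine (lintegral_mono_set hcover).trans ((lintegral_union_le _ _ _).trans ?_)
  rw [setLIntegral_measure_zero Z _ hZ, add_zero,
    setLIntegral_iUnion_of_directed _ hAmono.directed_le]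
  exact iSup_le hfin

/-- Bradley's weighted Hardy inequality with mixed norms: for `1 < p ≤ q < ∞`
the inequality
`(∫₀^∞ [u(x) ∫₀^x f]^q)^{1/q} ≤ c (∫₀^∞ [f v]^p)^{1/p}`
holds for all nonnegative measurable `f` iff
`sup_{r>0} (∫_r^∞ u^q)^{1/q} (∫₀^r v^{-p'})^{1/p'} < ∞`. -/
theorem stmt_6 (p q : ℝ) (hp : 1 < p) (hpq : p ≤ q)
    (u v : ℝ → ℝ) (hu : Measurable u) (hv : Measurable v)
    (hu0 : ∀ x ∈ Ioi (0 : ℝ), 0 ≤ u x) (hv0 : ∀ x ∈ Ioi (0 : ℝ), 0 ≤ v x) :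
    (∃ c : ℝ, 0 < c ∧ ∀ f : ℝ → ℝ, Measurable f → (∀ x ∈ Ioi (0 : ℝ), 0 ≤ f x) →
      (∫⁻ x in Ioi (0 : ℝ),
          (ENNReal.ofReal (u x) * ∫⁻ t in Ioc (0 : ℝ) x, ENNReal.ofReal (f t)) ^ q) ^ (1 / q) ≤
        ENNReal.ofReal c *
          (∫⁻ x in Ioi (0 : ℝ), (ENNReal.ofReal (f x) * ENNReal.ofReal (v x)) ^ p) ^ (1 / p)) ↔
    (⨆ r ∈ Ioi (0 : ℝ),
      (∫⁻ x in Ioi r, ENNReal.ofReal (u x) ^ q) ^ (1 / q) *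
        (∫⁻ x in Ioc (0 : ℝ) r, ENNReal.ofReal (v x) ^ (-(p / (p - 1)))) ^ ((p - 1) / p)) < ∞ := by
  constructor
  · rintro ⟨c, hc, H⟩
    refine lt_of_le_of_lt (iSup₂_le fun r hr => ?_) (ENNReal.ofReal_lt_top (r := c))
    exact nec p q hp hpq u v hu hv c hc H hv0 r hr
  · intro hB
    set B := (⨆ r ∈ Ioi (0 : ℝ),
      (∫⁻ x in Ioi r, ENNReal.ofReal (u x) ^ q) ^ (1 / q) *
        (∫⁻ x in Ioc (0 : ℝ) r, ENNReal.ofReal (v x) ^ (-(p / (p - 1)))) ^ ((p - 1) / p)) with hBdef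
    have hp0 : 0 < p := by linarith
    refine ⟨8 * B.toReal + 1, by positivity, fun f hf _ => ?_⟩
    by_cases hN : ∫⁻ x in Ioi (0 : ℝ), (ENNReal.ofReal (f x) * ENNReal.ofReal (v x)) ^ p = ∞
    · have hc : ENNReal.ofReal (8 * B.toReal + 1) ≠ 0 := by
        have : 0 < 8 * B.toReal + 1 := by positivity
        simpa using this
      rw [hN, ENNReal.top_rpow_of_pos (by positivity), ENNReal.mul_top hc]
      exact le_top
    · refine (suff p q hp hpq (fun x => ENNReal.ofReal (f x)) (fun x => ENNReal.ofReal (u x))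
        (fun x => ENNReal.ofReal (v x)) (by fun_prop) (by fun_prop) (by fun_prop)
        (fun _ => ENNReal.ofReal_ne_top) B hB.ne ?_ hN).trans ?_
      · intro x hx
        exact le_iSup₂_of_le x hx le_rfl
      · gcongr
        rw [ENNReal.ofReal_add (by positivity) zero_le_one, ENNReal.ofReal_mul (by norm_num),
          ENNReal.ofReal_toReal hB.ne]
        simp
end

section
/- Let n ≥ 2 and 1 < p < n, and suppose p ≤ q ≤ ∞. Then there exists a constant C > 0 such that for every smooth compactly supported f : ℝⁿ → ℝ, ‖f‖_{np/(n-p), q} ≤ C (∫_{ℝⁿ} |∇f(x)|^{p} dx)^{1/p}. -/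
open MeasureTheory Set ENNReal

/-- The distribution function `μ_f(λ) = μ{x : |f x| > λ}` of a function. -/
noncomputable def distribFn {α : Type*} [MeasurableSpace α] (μ : Measure α)
    (f : α → ℝ) (l : ℝ≥0∞) : ℝ≥0∞ :=
  μ {x | l < ENNReal.ofReal |f x|}

/-- The decreasing rearrangement `f*(t) = inf {λ > 0 : μ_f(λ) ≤ t}`. -/
noncomputable def rearr {α : Type*} [MeasurableSpace α] (μ : Measure α)
    (f : α → ℝ) (t : ℝ) : ℝ≥0∞ :=
  sInf {l : ℝ≥0∞ | 0 < l ∧ distribFn μ f l ≤ ENNReal.ofReal t}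

/-- The Lorentz `L^{p,q}` (quasi)norm
`‖f‖_{p,q} = (∫₀^∞ (t^{1/p} f*(t))^q dt/t)^{1/q}` for `q < ∞`, and
`‖f‖_{p,∞} = sup_{t>0} t^{1/p} f*(t)`. -/
noncomputable def lorentz {α : Type*} [MeasurableSpace α] (μ : Measure α)
    (p q : ℝ≥0∞) (f : α → ℝ) : ℝ≥0∞ :=
  if q = ∞ then ⨆ t ∈ Ioi (0 : ℝ), ENNReal.ofReal t ^ p.toReal⁻¹ * rearr μ f t
  else (∫⁻ t in Ioi (0 : ℝ),
      (ENNReal.ofReal t ^ p.toReal⁻¹ * rearr μ f t) ^ q.toReal / ENNReal.ofReal t) ^ q.toReal⁻¹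


lemma aux_cutoff : ∃ (φ : ℝ → ℝ) (M : ℝ), 0 ≤ M ∧ ContDiff ℝ 1 φ ∧ (∀ t, |t| ≤ 1 → φ t = 0) ∧
    (∀ t, 2 ≤ |t| → φ t = 1) ∧ (∀ t, |deriv φ t| ≤ M) ∧
    (∀ t, ¬ (1 < |t| ∧ |t| < 2) → deriv φ t = 0) := by
  let φ : ℝ → ℝ := fun t => Real.smoothTransition ((t ^ 2 - 1) / 3)
  have hc : ContDiff ℝ 1 φ := by
    have h : ContDiff ℝ 1 Real.smoothTransition := Real.smoothTransition.contDiff (n := 1)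
    exact h.comp (by fun_prop)
  have h0 : ∀ t, |t| ≤ 1 → φ t = 0 := by
    intro t ht
    apply Real.smoothTransition.zero_of_nonpos
    have : t ^ 2 ≤ 1 := (sq_le_one_iff_abs_le_one t).2 ht
    linarith
  have h1 : ∀ t, 2 ≤ |t| → φ t = 1 := by
    intro t ht
    apply Real.smoothTransition.one_of_one_le
    have : 4 ≤ t ^ 2 := by rw [← sq_abs]; nlinarith
    linarith
  have hd : ∀ t, ¬ (1 < |t| ∧ |t| < 2) → deriv φ t = 0 := by
    intro t ht
    by_cases h : |t| ≤ 1
    · apply IsLocalMin.deriv_eq_zero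
      refine Filter.Eventually.of_forall fun s => ?_
      rw [h0 t h]
      exact Real.smoothTransition.nonneg _
    · apply IsLocalMax.deriv_eq_zero
      refine Filter.Eventually.of_forall fun s => ?_
      rw [h1 t (by by_contra h'; exact ht ⟨by linarith, by linarith⟩)]
      exact Real.smoothTransition.le_one _
  obtain ⟨M, hM⟩ := (isCompact_Icc (a := (-2 : ℝ)) (b := 2)).exists_bound_of_continuousOn
    (hc.continuous_deriv le_rfl).continuousOn
  have hM0 : 0 ≤ M := (norm_nonneg _).trans (hM 0 (by norm_num))
  refine ⟨φ, M, hM0, hc, h0, h1, fun t => ?_, hd⟩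
  by_cases h : 1 < |t| ∧ |t| < 2
  · exact hM t ⟨by linarith [(abs_lt.1 h.2).1], (abs_lt.1 h.2).2.le⟩
  · rw [hd t h]; simpa using hM0

lemma aux_tsum {ι : Type*} (a : ι → ℝ≥0∞) (r : ℝ) (hr : 1 ≤ r) :
    ∑' i, a i ^ r ≤ (∑' i, a i) ^ r := by
  have key : ∀ x : ℝ≥0∞, x ^ r = x * x ^ (r - 1) := by
    intro x
    conv_lhs => rw [show r = 1 + (r - 1) by ring,
      ENNReal.rpow_add_of_nonneg _ _ zero_le_one (by linarith), ENNReal.rpow_one]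
  calc ∑' i, a i ^ r ≤ ∑' i, a i * (∑' j, a j) ^ (r - 1) := by
        refine ENNReal.tsum_le_tsum fun i => ?_
        rw [key]
        gcongr
        exact ENNReal.le_tsum i
    _ = _ := by rw [ENNReal.tsum_mul_right, ← key]

lemma aux_int (m : ℝ≥0∞) (hm : m ≠ ∞) (r : ℝ) (hr : 0 < r) :
    ∫⁻ t in Ioi (0 : ℝ), {t : ℝ | ENNReal.ofReal t < m}.indicator
      (fun t => ENNReal.ofReal t ^ r / ENNReal.ofReal t) t = ENNReal.ofReal r⁻¹ * m ^ r := by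
  have hs : MeasurableSet {t : ℝ | ENNReal.ofReal t < m} :=
    measurableSet_lt ENNReal.measurable_ofReal measurable_const
  rw [lintegral_indicator hs, Measure.restrict_restrict hs]
  have e : {t : ℝ | ENNReal.ofReal t < m} ∩ Ioi 0 = Ioo 0 m.toReal := by
    ext t
    simp only [mem_inter_iff, mem_ofPred_eq, mem_Ioi, mem_Ioo]
    constructor
    · rintro ⟨h, h0⟩
      exact ⟨h0, (ENNReal.ofReal_lt_iff_lt_toReal h0.le hm).1 h⟩
    · rintro ⟨h0, h⟩
      exact ⟨(ENNReal.ofReal_lt_iff_lt_toReal h0.le hm).2 h, h0⟩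
  rw [e, restrict_Ioo_eq_restrict_Ioc]
  have e2 : ∫⁻ t in Ioc 0 m.toReal, ENNReal.ofReal t ^ r / ENNReal.ofReal t
      = ∫⁻ t in Ioc 0 m.toReal, ENNReal.ofReal (t ^ (r - 1)) := by
    refine setLIntegral_congr_fun measurableSet_Ioc fun t ht => ?_
    rw [ENNReal.ofReal_rpow_of_pos ht.1, ← ENNReal.ofReal_div_of_pos ht.1,
      Real.rpow_sub_one ht.1.ne']
  have hi := intervalIntegral.intervalIntegrable_rpow' (a := 0) (b := m.toReal)
    (show -1 < r - 1 by linarith)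
  rw [e2, ← ofReal_integral_eq_lintegral_ofReal
    ((intervalIntegrable_iff_integrableOn_Ioc_of_le ENNReal.toReal_nonneg).1 hi),
    ← intervalIntegral.integral_of_le ENNReal.toReal_nonneg, integral_rpow (Or.inl (by linarith))]
  · rw [sub_add_cancel, Real.zero_rpow hr.ne', sub_zero, div_eq_inv_mul,
      ENNReal.ofReal_mul (inv_nonneg.2 hr.le), ← ENNReal.ofReal_rpow_of_nonneg ENNReal.toReal_nonneg hr.le,
      ENNReal.ofReal_toReal hm]
  · filter_upwards [ae_restrict_mem measurableSet_Ioc] with t ht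
    exact Real.rpow_nonneg ht.1.le _

lemma aux_rearr {α : Type*} [MeasurableSpace α] (μ : Measure α) (f : α → ℝ)
    (B : ℝ) (hB : ∀ x, |f x| ≤ B) (t : ℝ) (h0 : rearr μ f t ≠ 0) :
    ∃ k : ℤ, rearr μ f t ≤ 2 * 2 ^ k ∧ ENNReal.ofReal t < distribFn μ f (2 ^ k) := by
  have hle : ∀ l : ℝ≥0∞, 0 < l → distribFn μ f l ≤ ENNReal.ofReal t → rearr μ f t ≤ l :=
    fun l h1 h2 => sInf_le ⟨h1, h2⟩
  have hfin : rearr μ f t ≠ ∞ := by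
    refine ne_top_of_le_ne_top (b := ENNReal.ofReal B + 1) (by simp) (hle _ (by simp) ?_)
    have : {x | ENNReal.ofReal B + 1 < ENNReal.ofReal |f x|} = ∅ := by
      ext x
      simp only [mem_ofPred_eq, mem_empty_iff_false, iff_false, not_lt]
      exact (ENNReal.ofReal_le_ofReal (hB x)).trans le_self_add
    simp [distribFn, this]
  obtain ⟨k, hk1, hk2⟩ := ENNReal.exists_mem_Ioc_zpow h0 hfin (y := 2) (by norm_num) (by norm_num)
  refine ⟨k, ?_, ?_⟩
  · rw [ENNReal.zpow_add (by norm_num) (by norm_num), zpow_one, mul_comm] at hk2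
    exact hk2
  · by_contra h
    exact absurd (hle _ (ENNReal.zpow_pos (by norm_num) (by norm_num) k) (not_lt.1 h)) (not_le.2 hk1)

lemma aux_lorentz (P p : ℝ) (hP : 0 < P) (hp : 0 < p) (q : ℝ≥0∞) (hq : ENNReal.ofReal p ≤ q) :
    ∃ K : ℝ≥0∞, K ≠ ∞ ∧ ∀ {α : Type} [MeasurableSpace α] (μ : Measure α) (f : α → ℝ)
    (B : ℝ) (_ : ∀ x, |f x| ≤ B) (_ : ∀ k : ℤ, distribFn μ f (2 ^ k) ≠ ∞),
    lorentz μ (ENNReal.ofReal P) q f ≤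
      K * (∑' k : ℤ, (2 ^ k * distribFn μ f (2 ^ k) ^ P⁻¹) ^ p) ^ p⁻¹ := by
  by_cases hqt : q = ∞
  · refine ⟨2, by norm_num, ?_⟩
    intro α _ μ f B hB hm
    rw [lorentz, if_pos hqt, ENNReal.toReal_ofReal hP.le]
    refine iSup₂_le fun t ht => ?_
    by_cases h0 : rearr μ f t = 0
    · simp [h0]
    obtain ⟨k, h1, h2⟩ := aux_rearr μ f B hB t h0
    calc ENNReal.ofReal t ^ P⁻¹ * rearr μ f t
        ≤ distribFn μ f (2 ^ k) ^ P⁻¹ * (2 * 2 ^ k) := by gcongr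
      _ = 2 * (2 ^ k * distribFn μ f (2 ^ k) ^ P⁻¹) := by ring
      _ = 2 * ((2 ^ k * distribFn μ f (2 ^ k) ^ P⁻¹) ^ p) ^ p⁻¹ := by
          rw [ENNReal.rpow_rpow_inv hp.ne']
      _ ≤ _ := by
          gcongr
          exact ENNReal.le_tsum (f := fun k : ℤ => (2 ^ k * distribFn μ f (2 ^ k) ^ P⁻¹) ^ p) k
  · set Q := q.toReal with hQ
    have hpQ : p ≤ Q := (ENNReal.ofReal_le_iff_le_toReal hqt).1 hq
    have hQ0 : 0 < Q := hp.trans_le hpQ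
    refine ⟨(2 ^ Q * ENNReal.ofReal (P⁻¹ * Q)⁻¹) ^ Q⁻¹, ?_, ?_⟩
    · apply ENNReal.rpow_ne_top_of_nonneg (by positivity)
      exact ENNReal.mul_ne_top (ENNReal.rpow_ne_top_of_nonneg hQ0.le (by norm_num)) ENNReal.ofReal_ne_top
    intro α _ μ f B hB hm
    rw [lorentz, if_neg hqt, ENNReal.toReal_ofReal hP.le]
    set m : ℤ → ℝ≥0∞ := fun k => distribFn μ f (2 ^ k) with hmdef
    let g : ℤ → ℝ → ℝ≥0∞ := fun k t => (2 * 2 ^ k) ^ Q * {t : ℝ | ENNReal.ofReal t < m k}.indicator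
      (fun t => ENNReal.ofReal t ^ (P⁻¹ * Q) / ENNReal.ofReal t) t
    have hmeas0 : ∀ k, Measurable ({t : ℝ | ENNReal.ofReal t < m k}.indicator
      (fun t => ENNReal.ofReal t ^ (P⁻¹ * Q) / ENNReal.ofReal t)) := by
      intro k
      refine Measurable.indicator ?_ (measurableSet_lt ENNReal.measurable_ofReal measurable_const)
      exact (ENNReal.measurable_ofReal.pow_const _).div ENNReal.measurable_ofReal
    have hmeas : ∀ k, Measurable (g k) := fun k => (hmeas0 k).const_mul _
    have hpt : ∀ t, (ENNReal.ofReal t ^ P⁻¹ * rearr μ f t) ^ Q / ENNReal.ofReal t ≤ ∑' k, g k t := by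
      intro t
      by_cases h0 : rearr μ f t = 0
      · simp [h0, hQ0]
      obtain ⟨k, h1, h2⟩ := aux_rearr μ f B hB t h0
      refine le_trans ?_ (ENNReal.le_tsum k)
      have : t ∈ {t : ℝ | ENNReal.ofReal t < m k} := h2
      simp only [g, indicator_of_mem this]
      rw [ENNReal.mul_rpow_of_nonneg _ _ hQ0.le, ENNReal.rpow_mul, mul_comm, mul_div_assoc]
      gcongr
    have hbase : ∫⁻ t in Ioi (0 : ℝ), (ENNReal.ofReal t ^ P⁻¹ * rearr μ f t) ^ Q / ENNReal.ofReal t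
        ≤ 2 ^ Q * ENNReal.ofReal (P⁻¹ * Q)⁻¹ * (∑' k : ℤ, (2 ^ k * m k ^ P⁻¹) ^ p) ^ (Q / p) := by
      calc _ ≤ ∫⁻ t in Ioi (0 : ℝ), ∑' k, g k t := lintegral_mono hpt
        _ = ∑' k, ∫⁻ t in Ioi (0 : ℝ), g k t := lintegral_tsum fun k => (hmeas k).aemeasurable
        _ = ∑' k, 2 ^ Q * ENNReal.ofReal (P⁻¹ * Q)⁻¹ * (((2 ^ k * m k ^ P⁻¹) ^ p) ^ (Q / p)) := by
            congr 1; ext k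
            simp only [g]
            rw [lintegral_const_mul _ (hmeas0 k), aux_int _ (hm k) _ (by positivity),
              ← ENNReal.rpow_mul, mul_div_cancel₀ _ hp.ne', ENNReal.mul_rpow_of_nonneg _ _ hQ0.le,
              ENNReal.mul_rpow_of_nonneg _ _ hQ0.le, ENNReal.rpow_mul]
            ring
        _ ≤ _ := by
            rw [ENNReal.tsum_mul_left]
            gcongr
            exact aux_tsum _ _ ((one_le_div hp).2 hpQ)
    calc _ ≤ (2 ^ Q * ENNReal.ofReal (P⁻¹ * Q)⁻¹ *
          (∑' k : ℤ, (2 ^ k * m k ^ P⁻¹) ^ p) ^ (Q / p)) ^ Q⁻¹ := by gcongr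
      _ = _ := by
        rw [ENNReal.mul_rpow_of_nonneg _ _ (by positivity), ← ENNReal.rpow_mul]
        congr 2
        field_simp

lemma aux_zpow (k : ℤ) : ENNReal.ofReal ((2 : ℝ) ^ k) = (2 : ℝ≥0∞) ^ k := by
  have h : ((2 : ℝ) ^ k) = (((2 : NNReal) ^ k : NNReal) : ℝ) := by push_cast; rfl
  rw [h, ENNReal.ofReal_coe_nnreal, ENNReal.coe_zpow (by norm_num)]
  rfl

lemma aux_level (n : ℕ) (hn : 2 ≤ n) (p : ℝ) (hp1 : 1 < p) (hpn : p < n) :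
    ∃ K : ℝ≥0∞, K ≠ ∞ ∧ ∀ f : EuclideanSpace ℝ (Fin n) → ℝ,
      ContDiff ℝ 1 f → HasCompactSupport f → ∀ k : ℤ,
      2 ^ (k + 1) * distribFn volume f (2 ^ (k + 1)) ^ ((n : ℝ) * p / ((n : ℝ) - p))⁻¹ ≤
        K * (∫⁻ x in {x | (2 : ℝ) ^ k < |f x| ∧ |f x| < 2 ^ (k + 1)},
          ‖fderiv ℝ f x‖ₑ ^ p) ^ p⁻¹ := by
  obtain ⟨φ, M, hM0, hφ, hφ0, hφ1, hφM, hφd⟩ := aux_cutoff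
  have hp0 : 0 < p := by linarith
  have hn0 : (0 : ℝ) < n := by linarith
  set P : ℝ := (n : ℝ) * p / ((n : ℝ) - p) with hP
  have hP0 : 0 < P := div_pos (by positivity) (by linarith)
  set S : NNReal := SNormLESNormFDerivOfEqConst ℝ
    (volume : Measure (EuclideanSpace ℝ (Fin n))) p with hS
  refine ⟨2 * S * ENNReal.ofReal M, by finiteness, ?_⟩
  intro f hf hfc k
  have h2k : (0 : ℝ) < 2 ^ k := by positivity
  set A : Set (EuclideanSpace ℝ (Fin n)) := {x | (2 : ℝ) ^ k < |f x| ∧ |f x| < 2 ^ (k + 1)} with hA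
  have hAm : MeasurableSet A := by
    have hc : Continuous fun x => |f x| := hf.continuous.abs
    exact ((isOpen_lt continuous_const hc).inter (isOpen_lt hc continuous_const)).measurableSet
  let g : EuclideanSpace ℝ (Fin n) → ℝ := fun x => φ (((2 : ℝ) ^ k)⁻¹ * f x)
  have hg : ContDiff ℝ 1 g := hφ.comp (contDiff_const.mul hf)
  have hgc : HasCompactSupport g :=
    hfc.comp_left (g := fun y => φ (((2 : ℝ) ^ k)⁻¹ * y)) (by simpa using hφ0 0 (by simp))
  have habs : ∀ x, |((2 : ℝ) ^ k)⁻¹ * f x| = |f x| / 2 ^ k := by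
    intro x
    rw [abs_mul, abs_inv, abs_of_pos h2k, div_eq_inv_mul]
  have hsob := eLpNorm_le_eLpNorm_fderiv_of_eq (F := ℝ)
    (volume : Measure (EuclideanSpace ℝ (Fin n))) hg hgc
    (p := p.toNNReal) (p' := P.toNNReal) (by simpa using hp1.le) (by simp; omega)
    (by
      simp only [finrank_euclideanSpace, Fintype.card_fin, NNReal.coe_inv,
        Real.coe_toNNReal _ hp0.le, Real.coe_toNNReal _ hP0.le]
      rw [hP]
      have : (n : ℝ) - p ≠ 0 := by linarith
      field_simp)
  rw [Real.coe_toNNReal _ hp0.le, ← hS] at hsob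
  have hd : ∀ x, ‖fderiv ℝ g x‖ₑ ^ p ≤ A.indicator (fun x =>
      (ENNReal.ofReal M * (2 ^ k)⁻¹) ^ p * ‖fderiv ℝ f x‖ₑ ^ p) x := by
    intro x
    have hdf : DifferentiableAt ℝ f x := hf.differentiable one_ne_zero x
    have h1 : HasFDerivAt g (deriv φ (((2 : ℝ) ^ k)⁻¹ * f x) • (((2 : ℝ) ^ k)⁻¹ • fderiv ℝ f x)) x :=
      ((hφ.differentiable one_ne_zero _).hasDerivAt).comp_hasFDerivAt x
        (hdf.hasFDerivAt.const_mul (((2 : ℝ) ^ k)⁻¹))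
    rw [h1.fderiv]
    by_cases hx : x ∈ A
    · rw [indicator_of_mem hx, ← ENNReal.mul_rpow_of_nonneg _ _ hp0.le]
      refine ENNReal.rpow_le_rpow ?_ hp0.le
      rw [enorm_smul, enorm_smul, mul_assoc]
      gcongr
      · rw [Real.enorm_eq_ofReal_abs]
        exact ENNReal.ofReal_le_ofReal (hφM _)
      · rw [Real.enorm_eq_ofReal_abs, abs_of_pos (by positivity), ENNReal.ofReal_inv_of_pos h2k, aux_zpow]
    · rw [enorm_smul, hφd]
      · rw [enorm_zero, zero_mul, ENNReal.zero_rpow_of_pos hp0]; exact zero_le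
      · rw [habs, one_lt_div h2k, div_lt_iff₀ h2k, ← zpow_one_add₀ (by norm_num), add_comm]
        exact hx
  have hright : eLpNorm (fderiv ℝ g) (ENNReal.ofReal p) volume ≤
      ENNReal.ofReal M * (2 ^ k)⁻¹ * (∫⁻ x in A, ‖fderiv ℝ f x‖ₑ ^ p) ^ p⁻¹ := by
    rw [eLpNorm_eq_lintegral_rpow_enorm_toReal (by simpa using hp0) (by simp),
      ENNReal.toReal_ofReal hp0.le]
    simp only [one_div]
    calc _ ≤ (∫⁻ x, A.indicator (fun x =>
      (ENNReal.ofReal M * (2 ^ k)⁻¹) ^ p * ‖fderiv ℝ f x‖ₑ ^ p) x) ^ p⁻¹ := by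
          gcongr with x
          exact hd x
      _ = _ := by
          rw [lintegral_indicator hAm, lintegral_const_mul, ENNReal.mul_rpow_of_nonneg _ _ (by positivity),
            ENNReal.rpow_rpow_inv hp0.ne']
          have := (hf.continuous_fderiv one_ne_zero).measurable.enorm
          exact this.pow_const _
  have hleft : distribFn volume f (2 ^ (k + 1)) ^ P⁻¹ ≤ eLpNorm g (ENNReal.ofReal P) volume := by
    rw [eLpNorm_eq_lintegral_rpow_enorm_toReal (by simpa using hP0) (by simp),
      ENNReal.toReal_ofReal hP0.le]
    simp only [one_div]
    refine ENNReal.rpow_le_rpow ?_ (by positivity)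
    have hc : Continuous fun x => ENNReal.ofReal |f x| :=
      ENNReal.continuous_ofReal.comp hf.continuous.abs
    have hm : MeasurableSet {x | (2 : ℝ≥0∞) ^ (k + 1) < ENNReal.ofReal |f x|} :=
      (isOpen_lt continuous_const hc).measurableSet
    rw [distribFn, ← lintegral_indicator_one hm]
    refine lintegral_mono fun x => ?_
    by_cases hx : (2 : ℝ≥0∞) ^ (k + 1) < ENNReal.ofReal |f x|
    · have h3 : (2 : ℝ) ^ (k + 1) < |f x| := by
        have h4 : (2 : ℝ≥0∞) ^ (k + 1) = ENNReal.ofReal (2 ^ (k + 1)) := by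
          rw [aux_zpow]
        rw [h4] at hx
        exact (ENNReal.ofReal_lt_ofReal_iff_of_nonneg (by positivity)).1 hx
      have : g x = 1 := by
        apply hφ1
        rw [habs, le_div_iff₀ h2k, ← zpow_one_add₀ (by norm_num), add_comm]
        exact h3.le
      rw [indicator_of_mem (by exact hx), this]
      simp
    · rw [indicator_of_notMem (by exact hx)]
      exact zero_le
  calc _ ≤ 2 ^ (k + 1) * (S * (ENNReal.ofReal M * (2 ^ k)⁻¹ *
        (∫⁻ x in A, ‖fderiv ℝ f x‖ₑ ^ p) ^ p⁻¹)) := by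
        gcongr
        exact hleft.trans (hsob.trans (by gcongr; exact hright))
    _ = (2 ^ k * (2 ^ k)⁻¹) * (2 * S * ENNReal.ofReal M *
        (∫⁻ x in A, ‖fderiv ℝ f x‖ₑ ^ p) ^ p⁻¹) := by
        rw [ENNReal.zpow_add (by norm_num) (by norm_num), zpow_one]; ring
    _ = _ := by
        rw [ENNReal.mul_inv_cancel, one_mul]
        · exact (ENNReal.zpow_pos (by norm_num) (by norm_num) k).ne'
        · exact (ENNReal.zpow_lt_top (by norm_num) (by norm_num) k).ne

/-- Refined Sobolev inequality: for `p ≤ q ≤ ∞`,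
`‖f‖_{np/(n-p),q} ≤ C ‖∇f‖_{L^p}`. -/
theorem stmt_10 (n : ℕ) (hn : 2 ≤ n) (p : ℝ) (hp1 : 1 < p) (hpn : p < n)
    (q : ℝ≥0∞) (hq : ENNReal.ofReal p ≤ q) :
    ∃ C : ℝ, 0 < C ∧ ∀ f : EuclideanSpace ℝ (Fin n) → ℝ,
      ContDiff ℝ (⊤ : ℕ∞) f → HasCompactSupport f →
      lorentz volume (ENNReal.ofReal ((n : ℝ) * p / ((n : ℝ) - p))) q f ≤
        ENNReal.ofReal (C * (∫ x, ‖gradient f x‖ ^ p) ^ (1 / p)) := by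
  have hp0 : 0 < p := by linarith
  obtain ⟨K₁, hK₁, H₁⟩ := aux_level n hn p hp1 hpn
  set P : ℝ := (n : ℝ) * p / ((n : ℝ) - p) with hP
  have hP0 : 0 < P := div_pos (by nlinarith) (by linarith)
  obtain ⟨K₂, hK₂, H₂⟩ := aux_lorentz P p hP0 hp0 q hq
  refine ⟨(K₂ * K₁).toReal + 1, by positivity, ?_⟩
  intro f hf' hfc
  have hf : ContDiff ℝ 1 f := hf'.of_le (by exact_mod_cast le_top)
  obtain ⟨B, hB⟩ := hfc.exists_bound_of_continuous hf.continuous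
  have hfin : ∀ k : ℤ, distribFn volume f (2 ^ k) ≠ ∞ := by
    intro k
    refine ne_top_of_le_ne_top hfc.isCompact.measure_lt_top.ne (measure_mono ?_)
    intro x hx
    apply subset_tsupport
    intro h0
    simp [h0] at hx
  have hsum : ∑' k : ℤ, (2 ^ k * distribFn volume f (2 ^ k) ^ P⁻¹) ^ p ≤
      K₁ ^ p * ∫⁻ x, ‖fderiv ℝ f x‖ₑ ^ p := by
    rw [← (Equiv.addRight (1 : ℤ)).tsum_eq]
    let A : ℤ → Set (EuclideanSpace ℝ (Fin n)) := fun k => {x | (2 : ℝ) ^ k < |f x| ∧ |f x| < 2 ^ (k + 1)}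
    have hAm : ∀ k, MeasurableSet (A k) := by
      intro k
      have hc : Continuous fun x => |f x| := hf.continuous.abs
      exact ((isOpen_lt continuous_const hc).inter (isOpen_lt hc continuous_const)).measurableSet
    have hAd : Pairwise (Function.onFun Disjoint A) := by
      have key : ∀ i j x, x ∈ A i → x ∈ A j → i ≤ j := by
        intro i j x hi hj
        have := (zpow_lt_zpow_iff_right₀ (a := (2 : ℝ)) (by norm_num)).1 (hi.1.trans hj.2)
        omega
      intro i j hij
      refine Set.disjoint_left.2 fun x hi hj => hij (le_antisymm (key i j x hi hj) (key j i x hj hi))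
    calc _ ≤ ∑' k : ℤ, K₁ ^ p * ∫⁻ x in A k, ‖fderiv ℝ f x‖ₑ ^ p := by
          refine ENNReal.tsum_le_tsum fun k => ?_
          have := ENNReal.rpow_le_rpow (H₁ f hf hfc k) hp0.le
          rw [ENNReal.mul_rpow_of_nonneg K₁ _ hp0.le, ENNReal.rpow_inv_rpow hp0.ne'] at this
          exact this
      _ = K₁ ^ p * ∫⁻ x in ⋃ k, A k, ‖fderiv ℝ f x‖ₑ ^ p := by
          rw [ENNReal.tsum_mul_left, lintegral_iUnion hAm hAd]
      _ ≤ _ := by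
          exact mul_le_mul_right (setLIntegral_le_lintegral _ _) _
  have hgrad : ∀ x, ‖gradient f x‖ = ‖fderiv ℝ f x‖ := by
    intro x
    simp [gradient]
  have hint : ∫⁻ x, ‖fderiv ℝ f x‖ₑ ^ p = ENNReal.ofReal (∫ x, ‖gradient f x‖ ^ p) := by
    simp only [hgrad]
    have hcont : Continuous fun x => ‖fderiv ℝ f x‖ ^ p :=
      (hf.continuous_fderiv one_ne_zero).norm.rpow_const fun x => Or.inr hp0.le
    have hcs : HasCompactSupport fun x => ‖fderiv ℝ f x‖ ^ p :=
      (hfc.fderiv ℝ).comp_left (g := fun y => ‖y‖ ^ p) (by simp [hp0.ne'])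
    rw [ofReal_integral_eq_lintegral_ofReal (hcont.integrable_of_hasCompactSupport hcs)
      (Filter.Eventually.of_forall fun x => by positivity)]
    refine lintegral_congr fun x => ?_
    rw [← ENNReal.ofReal_rpow_of_nonneg (norm_nonneg _) hp0.le, ofReal_norm]
  have hI0 : 0 ≤ ∫ x, ‖gradient f x‖ ^ p := integral_nonneg fun x => by positivity
  calc _ ≤ K₂ * (∑' k : ℤ, (2 ^ k * distribFn volume f (2 ^ k) ^ P⁻¹) ^ p) ^ p⁻¹ :=
        H₂ volume f B hB hfin
    _ ≤ K₂ * (K₁ ^ p * ENNReal.ofReal (∫ x, ‖gradient f x‖ ^ p)) ^ p⁻¹ := by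
        rw [← hint]; gcongr
    _ = K₂ * K₁ * ENNReal.ofReal ((∫ x, ‖gradient f x‖ ^ p) ^ (1 / p)) := by
        rw [ENNReal.mul_rpow_of_nonneg _ _ (by positivity), ENNReal.rpow_rpow_inv hp0.ne', one_div,
          ENNReal.ofReal_rpow_of_nonneg hI0 (by positivity), mul_assoc]
    _ ≤ _ := by
        rw [ENNReal.ofReal_mul (by positivity)]
        gcongr
        rw [← ENNReal.ofReal_toReal (ENNReal.mul_ne_top hK₂ hK₁)]
        exact ENNReal.ofReal_le_ofReal (by simp)
end

section
/- Let n ≥ 2, 1 < p < n, and 1 ≤ q ≤ ∞. Then there exists a constant C > 0 such that for every smooth compactly supported f : ℝⁿ → ℝ, ‖ |x|^{-1} f ‖_{p,q} ≤ C ‖ |∇f| ‖_{p,q}, where |x|^{-1} f denotes the function x ↦ f(x)/|x|. -/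
open MeasureTheory Set ENNReal

lemma dil_inv (a : ℝ) (ha : 0 < a) (Φ : ℝ → ℝ≥0∞) :
    ∫⁻ t in Ioi (0 : ℝ), Φ (a * t) / ENNReal.ofReal t =
      ∫⁻ t in Ioi (0 : ℝ), Φ t / ENNReal.ofReal t := by
  have him : (fun t : ℝ => a * t) '' Ioi 0 = Ioi 0 := by
    ext y
    constructor
    · rintro ⟨t, ht, rfl⟩
      exact mul_pos ha ht
    · intro hy
      exact ⟨y / a, div_pos hy ha, by field_simp⟩
  have h := lintegral_image_eq_lintegral_abs_deriv_mul (s := Ioi (0 : ℝ))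
    (f := fun t => a * t) (f' := fun _ => a) measurableSet_Ioi
    (fun x _ => by simpa using ((hasDerivAt_id x).const_mul a).hasDerivWithinAt)
    (fun x _ y _ hxy => mul_left_cancel₀ ha.ne' hxy)
    (fun t => Φ t / ENNReal.ofReal t)
  rw [him] at h
  rw [h]
  refine setLIntegral_congr_fun measurableSet_Ioi fun t ht => ?_
  have ht' : (0 : ℝ) < t := ht
  rw [abs_of_pos ha, ENNReal.ofReal_mul ha.le, div_eq_mul_inv, div_eq_mul_inv,
    ENNReal.mul_inv (Or.inl (by simpa using ha)) (Or.inl ENNReal.ofReal_ne_top)]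
  have : ENNReal.ofReal a * (ENNReal.ofReal a)⁻¹ = 1 :=
    ENNReal.mul_inv_cancel (by simpa using ha) ENNReal.ofReal_ne_top
  calc Φ (a * t) * (ENNReal.ofReal t)⁻¹
      = (ENNReal.ofReal a * (ENNReal.ofReal a)⁻¹) * (Φ (a * t) * (ENNReal.ofReal t)⁻¹) := by
        rw [this, one_mul]
    _ = _ := by ring

section oned

variable {X : Type*} [MeasurableSpace X] (ν : Measure X) (a : X → ℝ)
  (K H : ℝ → ℝ≥0∞) (r : ℝ)

lemma oned_point (ham : Measurable a) (ha : ∀ᵐ x ∂ν, 0 < a x) (hK : Measurable K)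
    (hH : ∀ t > 0, H t ≤ ∫⁻ x, K (a x * t) ∂ν) (hr : 0 ≤ r) (t : ℝ) (ht : 0 < t) :
    ENNReal.ofReal t ^ r * H t ≤
      ∫⁻ x, ENNReal.ofReal (a x * t) ^ r * K (a x * t)
        ∂(ν.withDensity fun x => ENNReal.ofReal (a x) ^ (-r)) := by
  rw [lintegral_withDensity_eq_lintegral_mul _ (by fun_prop) (by fun_prop)]
  calc ENNReal.ofReal t ^ r * H t ≤ ENNReal.ofReal t ^ r * ∫⁻ x, K (a x * t) ∂ν := by
        gcongr; exact hH t ht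
    _ = ∫⁻ x, ENNReal.ofReal t ^ r * K (a x * t) ∂ν := by
        rw [lintegral_const_mul _ (by fun_prop)]
    _ ≤ _ := by
        refine lintegral_mono_ae ?_
        filter_upwards [ha] with x hx
        simp only [Pi.mul_apply]
        rw [ENNReal.ofReal_mul hx.le, ENNReal.mul_rpow_of_nonneg _ _ hr, ENNReal.rpow_neg]
        have h0 : ENNReal.ofReal (a x) ^ r ≠ 0 := by
          have : ENNReal.ofReal (a x) ≠ 0 := by simpa using hx
          simp [ENNReal.rpow_eq_zero_iff, this]
        have h1 : ENNReal.ofReal (a x) ^ r ≠ ⊤ := ENNReal.rpow_ne_top_of_nonneg hr ENNReal.ofReal_ne_top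
        rw [← mul_assoc, ← mul_assoc, ENNReal.inv_mul_cancel h0 h1, one_mul]

lemma oned_sup (ham : Measurable a) (ha : ∀ᵐ x ∂ν, 0 < a x) (hK : Measurable K)
    (hH : ∀ t > 0, H t ≤ ∫⁻ x, K (a x * t) ∂ν) (hr : 0 ≤ r) :
    (⨆ t ∈ Ioi (0 : ℝ), ENNReal.ofReal t ^ r * H t) ≤
      (∫⁻ x, ENNReal.ofReal (a x) ^ (-r) ∂ν) *
        ⨆ t ∈ Ioi (0 : ℝ), ENNReal.ofReal t ^ r * K t := by
  refine iSup₂_le fun t ht => (oned_point ν a K H r ham ha hK hH hr t ht).trans ?_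
  set S := ⨆ t ∈ Ioi (0 : ℝ), ENNReal.ofReal t ^ r * K t with hS
  calc _ ≤ ∫⁻ x, S ∂(ν.withDensity fun x => ENNReal.ofReal (a x) ^ (-r)) := by
        refine lintegral_mono_ae ?_
        filter_upwards [(withDensity_absolutelyContinuous ν _).ae_le ha] with x hx
        exact le_iSup₂ (f := fun t (_ : t ∈ Ioi (0 : ℝ)) => ENNReal.ofReal t ^ r * K t) (a x * t)
          (mul_pos hx ht)
    _ = _ := by
        rw [lintegral_const, withDensity_apply _ MeasurableSet.univ, Measure.restrict_univ, mul_comm]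

lemma oned_int [SFinite ν] (ham : Measurable a) (ha : ∀ᵐ x ∂ν, 0 < a x) (hK : Measurable K)
    (hH : ∀ t > 0, H t ≤ ∫⁻ x, K (a x * t) ∂ν) (hr : 0 ≤ r) (q : ℝ) (hq : 1 ≤ q) :
    (∫⁻ t in Ioi (0 : ℝ), (ENNReal.ofReal t ^ r * H t) ^ q / ENNReal.ofReal t) ^ q⁻¹ ≤
      (∫⁻ x, ENNReal.ofReal (a x) ^ (-r) ∂ν) *
        (∫⁻ t in Ioi (0 : ℝ), (ENNReal.ofReal t ^ r * K t) ^ q / ENNReal.ofReal t) ^ q⁻¹ := by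
  have hq0 : 0 < q := by linarith
  set A := ∫⁻ x, ENNReal.ofReal (a x) ^ (-r) ∂ν with hA
  set m := ν.withDensity fun x => ENNReal.ofReal (a x) ^ (-r) with hm
  set F : ℝ → ℝ≥0∞ := fun t => ENNReal.ofReal t ^ r * K t with hF
  have hFm : Measurable F := by fun_prop
  have hmu : m univ = A := by
    rw [hm, withDensity_apply _ MeasurableSet.univ, Measure.restrict_univ]
  have hpt : ∀ t > 0, (ENNReal.ofReal t ^ r * H t) ^ q ≤ A ^ (q - 1) * ∫⁻ x, F (a x * t) ^ q ∂m := by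
    intro t ht
    have h1 := oned_point ν a K H r ham ha hK hH hr t ht
    have h2 := eLpNorm'_le_eLpNorm'_mul_rpow_measure_univ (μ := m) (f := fun x => F (a x * t))
      (p := 1) (q := q) one_pos hq (hFm.comp (by fun_prop)).aestronglyMeasurable
    simp only [eLpNorm', enorm_eq_self, ENNReal.rpow_one, div_one] at h2
    calc (ENNReal.ofReal t ^ r * H t) ^ q
        ≤ ((∫⁻ x, F (a x * t) ^ q ∂m) ^ (1 / q) * m univ ^ (1 - 1 / q)) ^ q := by
          exact ENNReal.rpow_le_rpow (h1.trans h2) hq0.le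
      _ = _ := by
          rw [ENNReal.mul_rpow_of_nonneg _ _ hq0.le, ← ENNReal.rpow_mul, ← ENNReal.rpow_mul, hmu,
            one_div, inv_mul_cancel₀ hq0.ne', ENNReal.rpow_one, mul_comm]
          congr 2
          field_simp
  have main : (∫⁻ t in Ioi (0 : ℝ), (ENNReal.ofReal t ^ r * H t) ^ q / ENNReal.ofReal t) ≤
      A ^ q * ∫⁻ t in Ioi (0 : ℝ), F t ^ q / ENNReal.ofReal t := by
    calc (∫⁻ t in Ioi (0 : ℝ), (ENNReal.ofReal t ^ r * H t) ^ q / ENNReal.ofReal t)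
        ≤ ∫⁻ t in Ioi (0 : ℝ), A ^ (q - 1) * ∫⁻ x, F (a x * t) ^ q / ENNReal.ofReal t ∂m := by
          refine setLIntegral_mono' measurableSet_Ioi fun t ht => ?_
          simp only [div_eq_mul_inv]
          rw [lintegral_mul_const _ (by fun_prop), ← mul_assoc]
          gcongr
          exact hpt t ht
      _ = A ^ (q - 1) * ∫⁻ t in Ioi (0 : ℝ), ∫⁻ x, F (a x * t) ^ q / ENNReal.ofReal t ∂m := by
          rw [lintegral_const_mul]
          refine Measurable.lintegral_prod_right' (f := fun z : ℝ × X => F (a z.2 * z.1) ^ q / ENNReal.ofReal z.1) ?_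
          fun_prop
      _ = A ^ (q - 1) * ∫⁻ x, (∫⁻ t in Ioi (0 : ℝ), F (a x * t) ^ q / ENNReal.ofReal t) ∂m := by
          rw [lintegral_lintegral_swap]
          apply Measurable.aemeasurable
          unfold Function.uncurry
          fun_prop
      _ = A ^ (q - 1) * ∫⁻ x, (∫⁻ t in Ioi (0 : ℝ), F t ^ q / ENNReal.ofReal t) ∂m := by
          congr 1
          refine lintegral_congr_ae ?_
          filter_upwards [(withDensity_absolutelyContinuous ν _).ae_le ha] with x hx
          exact dil_inv (a x) hx (fun t => F t ^ q)
      _ = _ := by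
          rw [lintegral_const, hmu, mul_comm _ A, ← mul_assoc]
          congr 1
          nth_rewrite 2 [← ENNReal.rpow_one A]
          rw [← ENNReal.rpow_add_of_nonneg _ _ (by linarith) zero_le_one]
          congr 1; ring
  calc _ ≤ (A ^ q * ∫⁻ t in Ioi (0 : ℝ), F t ^ q / ENNReal.ofReal t) ^ q⁻¹ := by gcongr
    _ = _ := by
      rw [ENNReal.mul_rpow_of_nonneg _ _ (by positivity), ← ENNReal.rpow_mul,
        mul_inv_cancel₀ hq0.ne', ENNReal.rpow_one]

end oned

lemma rearr_antitone {α : Type*} [MeasurableSpace α] (μ : Measure α) (f : α → ℝ) :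
    Antitone (rearr μ f) := by
  intro s t hst
  exact sInf_le_sInf fun l hl => ⟨hl.1, hl.2.trans (ENNReal.ofReal_le_ofReal hst)⟩

lemma le_rearr {α : Type*} [MeasurableSpace α] (μ : Measure α) (f : α → ℝ) (t : ℝ) (l : ℝ≥0∞)
    (h : ENNReal.ofReal t < distribFn μ f l) : l ≤ rearr μ f t := by
  refine le_sInf fun k hk => ?_
  by_contra hlt
  push Not at hlt
  have : distribFn μ f l ≤ distribFn μ f k :=
    measure_mono fun x (hx : l < _) => hlt.trans hx
  exact absurd (h.trans_le (this.trans hk.2)) (lt_irrefl _)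

lemma lt_distrib {α : Type*} [MeasurableSpace α] (μ : Measure α) (f : α → ℝ) (t : ℝ) (l : ℝ≥0∞)
    (hl : 0 < l) (h : l < rearr μ f t) : ENNReal.ofReal t < distribFn μ f l := by
  by_contra hlt
  push Not at hlt
  exact absurd (h.trans_le (sInf_le ⟨hl, hlt⟩)) (lt_irrefl _)

lemma rearr_lt_top {α : Type*} [MeasurableSpace α] (μ : Measure α) (f : α → ℝ) (t M : ℝ)
    (h : ∀ x, |f x| ≤ M) : rearr μ f t < ⊤ := by
  refine lt_of_le_of_lt (sInf_le (a := ENNReal.ofReal (|M| + 1)) ⟨?_, ?_⟩) ENNReal.ofReal_lt_top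
  · simp; positivity
  · have : {x | ENNReal.ofReal (|M| + 1) < ENNReal.ofReal |f x|} = ∅ := by
      ext x
      simp only [mem_setOf_eq, mem_empty_iff_false, iff_false, not_lt]
      exact ENNReal.ofReal_le_ofReal (by linarith [h x, le_abs_self M])
    simp [distribFn, this]

lemma hl_ineq (n : ℕ) (G : EuclideanSpace ℝ (Fin n) → ℝ)
    (hG : Measurable G) (hG0 : ∀ x, 0 ≤ G x) (M : ℝ) (hM : ∀ x, |G x| ≤ M)
    (S : Set (EuclideanSpace ℝ (Fin n))) (m : ℝ) (hm : 0 < m)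
    (hS : volume S = ENNReal.ofReal m) (s : ℝ) (hs : 0 < s) :
    ∫⁻ x in S, ENNReal.ofReal (G (s • x)) ≤
      ENNReal.ofReal m * ∫⁻ w in Ioo (0 : ℝ) 1, rearr volume G (s ^ n * w * m) := by
  have hfin : ∀ t, rearr volume G t ≠ ⊤ := fun t => (rearr_lt_top volume G t M hM).ne
  have hmeas : Measurable (rearr volume G) := (rearr_antitone volume G).measurable
  have hsn : 0 < s ^ n := pow_pos hs n
  have e1 : ∀ w : ℝ, rearr volume G (s ^ n * w * m) =
      ENNReal.ofReal ((rearr volume G (s ^ n * w * m)).toReal) :=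
    fun w => (ENNReal.ofReal_toReal (hfin _)).symm
  rw [lintegral_congr e1]
  rw [lintegral_eq_lintegral_meas_lt _ (Filter.Eventually.of_forall fun x => hG0 _)
    (by fun_prop : Measurable fun x => G (s • x)).aemeasurable,
    lintegral_eq_lintegral_meas_le _ (Filter.Eventually.of_forall fun x => ENNReal.toReal_nonneg)
    (by fun_prop : Measurable fun w => (rearr volume G (s ^ n * w * m)).toReal).aemeasurable,
    ← lintegral_const_mul' _ _ ENNReal.ofReal_ne_top]
  refine setLIntegral_mono' measurableSet_Ioi fun l hl => ?_
  have hl' : (0 : ℝ) < l := hl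
  set D := distribFn volume G (ENNReal.ofReal l) with hD
  have hb1 : (volume.restrict S) {x | l < G (s • x)} ≤ ENNReal.ofReal m := by
    rw [← hS]
    exact (measure_mono (subset_univ _)).trans (by simp)
  have hb2 : (volume.restrict S) {x | l < G (s • x)} ≤ ENNReal.ofReal (s ^ n)⁻¹ * D := by
    refine (Measure.restrict_apply_le _ _).trans ?_
    have h := Measure.addHaar_preimage_smul (volume : Measure (EuclideanSpace ℝ (Fin n))) hs.ne'
      {x | ENNReal.ofReal l < ENNReal.ofReal |G x|}
    rw [finrank_euclideanSpace_fin, abs_of_pos (inv_pos.2 hsn)] at h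
    rw [hD, distribFn, ← h]
    refine measure_mono fun x hx => ?_
    have hx' : l < G (s • x) := hx
    simp only [mem_preimage, mem_setOf_eq]
    rw [abs_of_nonneg (hG0 _)]
    exact (ENNReal.ofReal_lt_ofReal_iff (hl'.trans hx')).2 hx'
  have hsub : ∀ w : ℝ, ENNReal.ofReal (s ^ n * w * m) < D →
      l ≤ (rearr volume G (s ^ n * w * m)).toReal := by
    intro w hw
    exact (ENNReal.ofReal_le_iff_le_toReal (hfin _)).1 (le_rearr _ _ _ _ hw)
  rw [Measure.restrict_apply' (measurableSet_Ioo (a := (0 : ℝ)) (b := 1))]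
  by_cases hc : ENNReal.ofReal (s ^ n * m) ≤ D
  · refine hb1.trans ?_
    have : Ioo (0 : ℝ) 1 ⊆
        {w | l ≤ (rearr volume G (s ^ n * w * m)).toReal} ∩ Ioo (0 : ℝ) 1 := by
      intro w hw
      refine ⟨hsub w (lt_of_lt_of_le ?_ hc), hw⟩
      refine (ENNReal.ofReal_lt_ofReal_iff (by positivity)).2 ?_
      have := mul_pos hsn hm
      nlinarith [hw.2]
    calc ENNReal.ofReal m = ENNReal.ofReal m * volume (Ioo (0 : ℝ) 1) := by simp
      _ ≤ _ := by gcongr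
  · push Not at hc
    have hDt : D ≠ ⊤ := (hc.trans ENNReal.ofReal_lt_top).ne
    refine hb2.trans ?_
    set d := D.toReal with hd
    have hDd : D = ENNReal.ofReal d := (ENNReal.ofReal_toReal hDt).symm
    have hd0 : 0 ≤ d := ENNReal.toReal_nonneg
    have hdlt : d < s ^ n * m := by
      rw [hDd] at hc
      exact (ENNReal.ofReal_lt_ofReal_iff (by positivity)).1 hc
    have : Ioo (0 : ℝ) (d / (s ^ n * m)) ⊆
        {w | l ≤ (rearr volume G (s ^ n * w * m)).toReal} ∩ Ioo (0 : ℝ) 1 := by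
      intro w hw
      have hw2 : w * (s ^ n * m) < d := (lt_div_iff₀ (by positivity)).1 hw.2
      have hw1 := hw.1
      refine ⟨hsub w ?_, hw1, hw.2.trans ((div_lt_one (by positivity)).2 hdlt)⟩
      rw [hDd]
      refine (ENNReal.ofReal_lt_ofReal_iff ?_).2 ?_
      · exact lt_trans (by positivity) hw2
      · linarith
    calc ENNReal.ofReal (s ^ n)⁻¹ * D
        = ENNReal.ofReal m * volume (Ioo (0 : ℝ) (d / (s ^ n * m))) := by
          rw [hDd, Real.volume_Ioo, ← ENNReal.ofReal_mul (by positivity),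
            ← ENNReal.ofReal_mul hm.le]
          congr 1
          field_simp
          simp
      _ ≤ _ := by gcongr

lemma rearr_bound (n : ℕ) (G h : EuclideanSpace ℝ (Fin n) → ℝ)
    (hG : Measurable G) (hG0 : ∀ x, 0 ≤ G x) (M : ℝ) (hM : ∀ x, |G x| ≤ M)
    (hh : Measurable h) (hsupp : volume {x | h x ≠ 0} < ⊤)
    (hpt : ∀ x, ENNReal.ofReal |h x| ≤ ∫⁻ s in Ioi (1 : ℝ), ENNReal.ofReal (G (s • x)))
    (t : ℝ) (ht : 0 < t) :
    rearr volume h t ≤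
      ∫⁻ s in Ioi (1 : ℝ), ∫⁻ w in Ioo (0 : ℝ) 1, rearr volume G (s ^ n * w * t) := by
  refine le_of_forall_lt_imp_le_of_dense fun l hl => ?_
  rcases eq_or_ne l 0 with rfl | hl0
  · exact bot_le
  have hl0' : 0 < l := pos_iff_ne_zero.2 hl0
  have h1 := lt_distrib volume h t l hl0' hl
  set S := {x | l < ENNReal.ofReal |h x|} with hS
  have hSm : MeasurableSet S := measurableSet_lt measurable_const (by fun_prop)
  have hDt : volume S ≠ ⊤ := by
    refine (lt_of_le_of_lt (measure_mono fun x hx => ?_) hsupp).ne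
    intro h0
    have hx' : l < ENNReal.ofReal |h x| := hx
    simp [h0] at hx'
  change ENNReal.ofReal t < volume S at h1
  set m := (volume S).toReal with hm
  have hSm' : volume S = ENNReal.ofReal m := (ENNReal.ofReal_toReal hDt).symm
  have htm : t < m := (ENNReal.ofReal_lt_iff_lt_toReal ht.le hDt).1 h1
  have hm0 : 0 < m := ht.trans htm
  have key : ENNReal.ofReal m * l ≤ ENNReal.ofReal m *
      ∫⁻ s in Ioi (1 : ℝ), ∫⁻ w in Ioo (0 : ℝ) 1, rearr volume G (s ^ n * w * t) := by
    calc ENNReal.ofReal m * l = ∫⁻ x in S, l := by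
          rw [setLIntegral_const, hSm', mul_comm]
      _ ≤ ∫⁻ x in S, ∫⁻ s in Ioi (1 : ℝ), ENNReal.ofReal (G (s • x)) :=
          setLIntegral_mono' hSm fun x hx => (le_of_lt hx).trans (hpt x)
      _ = ∫⁻ s in Ioi (1 : ℝ), ∫⁻ x in S, ENNReal.ofReal (G (s • x)) := by
          rw [lintegral_lintegral_swap]
          apply Measurable.aemeasurable
          unfold Function.uncurry
          fun_prop
      _ ≤ ∫⁻ s in Ioi (1 : ℝ), ENNReal.ofReal m *
            ∫⁻ w in Ioo (0 : ℝ) 1, rearr volume G (s ^ n * w * t) := by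
          refine setLIntegral_mono' measurableSet_Ioi fun s hs => ?_
          have hs' : (0 : ℝ) < s := lt_trans one_pos hs
          refine (hl_ineq n G hG hG0 M hM S m hm0 hSm' s hs').trans ?_
          refine mul_le_mul_right ?_ _
          refine setLIntegral_mono' measurableSet_Ioo fun w hw => ?_
          refine rearr_antitone _ _ ?_
          have := hw.1
          gcongr
      _ = _ := lintegral_const_mul' _ _ ENNReal.ofReal_ne_top
  exact (ENNReal.mul_le_mul_iff_right (by simpa using hm0) ENNReal.ofReal_ne_top).1 key

lemma ray_bound (n : ℕ) (f : EuclideanSpace ℝ (Fin n) → ℝ) (hf : ContDiff ℝ (⊤ : ℕ∞) f)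
    (hc : HasCompactSupport f) (x : EuclideanSpace ℝ (Fin n)) :
    ENNReal.ofReal |f x / ‖x‖| ≤
      ∫⁻ s in Ioi (1 : ℝ), ENNReal.ofReal ‖gradient f (s • x)‖ := by
  rcases eq_or_ne x 0 with rfl | hx
  · simp
  have hx0 : 0 < ‖x‖ := norm_pos_iff.2 hx
  set u : ℝ → ℝ := fun s => f ((-s) • x) with hu
  have hf1 : ContDiff ℝ 1 f := hf.of_le (by exact_mod_cast le_top)
  have hu1 : ContDiff ℝ 1 u := hf1.comp (by fun_prop)
  have hemb : Topology.IsClosedEmbedding (fun s : ℝ => (-s) • x) :=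
    (isClosedEmbedding_smul_left hx).comp (Homeomorph.neg ℝ).isClosedEmbedding
  have huc : HasCompactSupport u := hc.comp_isClosedEmbedding hemb
  have h1 := huc.enorm_le_lintegral_Ici_deriv hu1 (-1)
  have hd : ∀ s, ‖deriv u s‖ₑ ≤ ENNReal.ofReal ‖x‖ * ENNReal.ofReal ‖gradient f ((-s) • x)‖ := by
    intro s
    have hfd : HasFDerivAt f (fderiv ℝ f ((-s) • x)) ((-s) • x) :=
      (hf1.differentiable one_ne_zero _).hasFDerivAt
    have hl : HasDerivAt (fun s : ℝ => (-s) • x) (-x) s := by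
      simpa using ((hasDerivAt_id s).neg).smul_const x
    have := (hfd.comp_hasDerivAt s hl).deriv
    have h2 : deriv u s = fderiv ℝ f ((-s) • x) (-x) := this
    rw [h2, ← ENNReal.ofReal_mul (norm_nonneg _), ← ofReal_norm_eq_enorm]
    refine ENNReal.ofReal_le_ofReal ?_
    refine (ContinuousLinearMap.le_opNorm _ _).trans ?_
    rw [norm_neg, mul_comm, gradient, LinearIsometryEquiv.norm_map]
  have h3 : ∫⁻ s in Iic (-1 : ℝ), ENNReal.ofReal ‖gradient f ((-s) • x)‖ =
      ∫⁻ s in Ioi (1 : ℝ), ENNReal.ofReal ‖gradient f (s • x)‖ := by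
    rw [setLIntegral_congr Ioi_ae_eq_Ici]
    have := (Measure.measurePreserving_neg (volume : Measure ℝ)).setLIntegral_comp_preimage_emb
      (MeasurableEquiv.neg ℝ).measurableEmbedding
      (fun s => ENNReal.ofReal ‖gradient f (s • x)‖) (Ici 1)
    simpa using this
  have h4 : ENNReal.ofReal |f x| ≤ ENNReal.ofReal ‖x‖ *
      ∫⁻ s in Ioi (1 : ℝ), ENNReal.ofReal ‖gradient f (s • x)‖ := by
    rw [← h3, ← lintegral_const_mul' _ _ ENNReal.ofReal_ne_top]
    have h5 : ‖u (-1)‖ₑ = ENNReal.ofReal |f x| := by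
      simp [hu, Real.enorm_eq_ofReal_abs]
    rw [← h5]
    exact h1.trans (lintegral_mono fun s => hd s)
  rw [abs_div, abs_norm, ENNReal.ofReal_div_of_pos hx0]
  exact ENNReal.div_le_of_le_mul' h4

lemma const_finite (n : ℕ) (p : ℝ) (hp1 : 1 < p) (hpn : p < n) :
    ∫⁻ z, ENNReal.ofReal (z.1 ^ n * z.2) ^ (-p⁻¹)
      ∂((volume.restrict (Ioi (1 : ℝ))).prod (volume.restrict (Ioo (0 : ℝ) 1))) < ⊤ := by
  have hp0 : 0 < p := by linarith
  have h1 : ∫⁻ s in Ioi (1 : ℝ), ENNReal.ofReal (s ^ (-(n * p⁻¹) : ℝ)) < ⊤ := by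
    have : (-(n * p⁻¹) : ℝ) < -1 := by
      rw [neg_lt_neg_iff, ← div_eq_mul_inv, one_lt_div hp0]; exact hpn
    have hi := (integrableOn_Ioi_rpow_of_lt this one_pos).lintegral_lt_top
    exact hi
  have h2 : ∫⁻ w in Ioo (0 : ℝ) 1, ENNReal.ofReal (w ^ (-p⁻¹ : ℝ)) < ⊤ := by
    have : -1 < (-p⁻¹ : ℝ) := by
      rw [neg_lt_neg_iff]; exact inv_lt_one_of_one_lt₀ hp1
    exact ((intervalIntegral.integrableOn_Ioo_rpow_iff one_pos).2 this).lintegral_lt_top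
  have e : ∫⁻ z, ENNReal.ofReal (z.1 ^ n * z.2) ^ (-p⁻¹)
      ∂((volume.restrict (Ioi (1 : ℝ))).prod (volume.restrict (Ioo (0 : ℝ) 1))) =
      ∫⁻ z, ENNReal.ofReal (z.1 ^ (-(n * p⁻¹) : ℝ)) * ENNReal.ofReal (z.2 ^ (-p⁻¹ : ℝ))
      ∂((volume.restrict (Ioi (1 : ℝ))).prod (volume.restrict (Ioo (0 : ℝ) 1))) := by
    rw [Measure.prod_restrict]
    refine setLIntegral_congr_fun (measurableSet_Ioi.prod measurableSet_Ioo) fun z hz => ?_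
    have hz1 : 0 < z.1 := lt_trans one_pos hz.1
    have hz2 : 0 < z.2 := hz.2.1
    beta_reduce
    rw [ENNReal.ofReal_rpow_of_pos (by positivity), ← ENNReal.ofReal_mul (by positivity),
      Real.mul_rpow (by positivity) hz2.le, ← Real.rpow_natCast, ← Real.rpow_mul hz1.le]
    congr 3
    ring
  rw [e, lintegral_prod_mul (f := fun s : ℝ => ENNReal.ofReal (s ^ (-(n * p⁻¹) : ℝ)))
    (g := fun w : ℝ => ENNReal.ofReal (w ^ (-p⁻¹ : ℝ))) (by fun_prop) (by fun_prop)]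
  exact ENNReal.mul_lt_top h1 h2

/-- Hardy inequality in Lorentz spaces on ℝⁿ:
`‖|x|⁻¹ f‖_{p,q} ≤ C ‖|∇f|‖_{p,q}`. -/
theorem stmt_11 (n : ℕ) (hn : 2 ≤ n) (p : ℝ) (hp1 : 1 < p) (hpn : p < n)
    (q : ℝ≥0∞) (hq : 1 ≤ q) :
    ∃ C : ℝ, 0 < C ∧ ∀ f : EuclideanSpace ℝ (Fin n) → ℝ,
      ContDiff ℝ (⊤ : ℕ∞) f → HasCompactSupport f →
      lorentz volume (ENNReal.ofReal p) q (fun x => f x / ‖x‖) ≤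
        ENNReal.ofReal C *
          lorentz volume (ENNReal.ofReal p) q (fun x => ‖gradient f x‖) := by
  have hp0 : 0 < p := by linarith
  set ν := (volume.restrict (Ioi (1 : ℝ))).prod (volume.restrict (Ioo (0 : ℝ) 1)) with hν
  set A := ∫⁻ z, ENNReal.ofReal (z.1 ^ n * z.2) ^ (-p⁻¹) ∂ν with hA
  have hAt : A < ⊤ := const_finite n p hp1 hpn
  refine ⟨A.toReal + 1, by positivity, fun f hf hc => ?_⟩
  have hAC : A ≤ ENNReal.ofReal (A.toReal + 1) :=
    (ENNReal.ofReal_toReal hAt.ne).symm.le.trans (ENNReal.ofReal_le_ofReal (by linarith))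
  refine le_trans ?_ (mul_le_mul_left hAC _)
  have hgc : Continuous (gradient f) :=
    (InnerProductSpace.toDual ℝ (EuclideanSpace ℝ (Fin n))).symm.continuous.comp
      (hf.continuous_fderiv (by simp))
  have hgs : HasCompactSupport (gradient f) := (hc.fderiv ℝ).comp_left (map_zero _)
  obtain ⟨M, hM⟩ := hgs.exists_bound_of_continuous hgc
  set G : EuclideanSpace ℝ (Fin n) → ℝ := fun x => ‖gradient f x‖ with hGdef
  set h : EuclideanSpace ℝ (Fin n) → ℝ := fun x => f x / ‖x‖ with hhdef
  have hKm : Measurable (rearr volume G) := (rearr_antitone volume G).measurable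
  have hH : ∀ t > 0, rearr volume h t ≤ ∫⁻ z, rearr volume G (z.1 ^ n * z.2 * t) ∂ν := by
    intro t ht
    rw [hν, lintegral_prod _ (by fun_prop)]
    refine rearr_bound n G h hgc.norm.measurable (fun x => norm_nonneg _) M
      (fun x => by simpa [hGdef] using hM x) (hf.continuous.measurable.div (by fun_prop)) ?_
      (fun x => ray_bound n f hf hc x) t ht
    refine lt_of_le_of_lt (measure_mono fun x hx => ?_) hc.measure_lt_top
    refine subset_tsupport f fun h0 => hx ?_
    simp [hhdef, h0]
  have ha : ∀ᵐ z ∂ν, 0 < z.1 ^ n * z.2 := by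
    rw [hν, Measure.prod_restrict]
    filter_upwards [ae_restrict_mem (measurableSet_Ioi.prod measurableSet_Ioo)] with z hz
    have hz1 : 0 < z.1 := lt_trans one_pos hz.1
    have hz2 : 0 < z.2 := hz.2.1
    positivity
  have ham : Measurable fun z : ℝ × ℝ => z.1 ^ n * z.2 := by fun_prop
  have hr : 0 ≤ p⁻¹ := by positivity
  unfold lorentz
  rw [ENNReal.toReal_ofReal hp0.le]
  split_ifs with hqt
  · exact oned_sup ν _ _ _ _ ham ha hKm hH hr
  · refine oned_int ν _ _ _ _ ham ha hKm hH hr q.toReal ?_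
    rw [← ENNReal.toReal_one]
    exact ENNReal.toReal_mono hqt hq
end
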